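/- arXiv:2402.02011 — 3 statements merged into one kernel-verified Lean document; each statement's English description precedes it below -/
import Mathlib

section
/- (Theorem 1, first identity) Let m ≥ 3 and k ≥ 1, and let f: ℝ^m × ℝ^m → Cl_m be smooth with f(x,·) ∈ H_k for each fixed x. Then D_k f = −R_k² P_k^+ f + (2/(m+2k−4)) T_k^* R_k P_k^+ f − (2/(m+2k−4)) T_k Q_k P_k^− f − ((m+2k)/(m+2k−4)) Q_k² P_k^− f, where all projections P_k^± act in the variable u and all operators D_x act in the variable x. -/
open scoped BigOperators

/-- The defining Clifford relations `e i * e j + e j * e i = -2 δ_{ij}` for the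
generators of the real Clifford algebra `Cl_m`. -/
def CliffordRel {m : ℕ} {Cl : Type*} [Ring Cl] [Algebra ℝ Cl] (e : Fin m → Cl) : Prop :=
  ∀ i j : Fin m, e i * e j + e j * e i = algebraMap ℝ Cl (if i = j then -2 else 0)

/-- The embedding of `ℝ^m` into the Clifford algebra, `x ↦ ∑ j, x j • e j`. -/
def emb {m : ℕ} {Cl : Type*} [Ring Cl] [Algebra ℝ Cl] (e : Fin m → Cl)
    (x : Fin m → ℝ) : Cl :=
  ∑ j, x j • e j

/-- The partial derivative `∂f/∂x_j`. -/
noncomputable def pd {m : ℕ} {E : Type*} [NormedAddCommGroup E] [NormedSpace ℝ E]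
    (j : Fin m) (f : (Fin m → ℝ) → E) : (Fin m → ℝ) → E :=
  fun x => fderiv ℝ f x (Pi.single j 1)

/-- The Laplacian `Δ f = ∑ j, ∂²f/∂x_j²`. -/
noncomputable def lap {m : ℕ} {E : Type*} [NormedAddCommGroup E] [NormedSpace ℝ E]
    (f : (Fin m → ℝ) → E) : (Fin m → ℝ) → E :=
  fun x => ∑ j, pd j (pd j f) x

/-- The Dirac operator `D f = ∑ j, e j * ∂f/∂x_j` (left Clifford multiplication). -/
noncomputable def dirac {m : ℕ} {Cl : Type*} [NormedRing Cl] [NormedAlgebra ℝ Cl]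
    (e : Fin m → Cl) (f : (Fin m → ℝ) → Cl) : (Fin m → ℝ) → Cl :=
  fun x => ∑ j, e j * pd j f x

/-- `f : ℝ^m → E` is a (module-valued) polynomial homogeneous of degree `k`:
it lies in the real span of the monomial functions `x ↦ (∏ i, x i ^ α i) • c`
with total degree `∑ i, α i = k`. -/
def IsHomPoly {m : ℕ} {E : Type*} [AddCommGroup E] [Module ℝ E] (k : ℕ)
    (f : (Fin m → ℝ) → E) : Prop :=
  f ∈ Submodule.span ℝ {g : (Fin m → ℝ) → E |
    ∃ (α : Fin m → ℕ) (c : E), (∑ i, α i) = k ∧ g = fun x => (∏ i, x i ^ α i) • c}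

/-- Partial derivative `∂/∂x_j` of a function of two variables `(x, u)`. -/
noncomputable def pdx {m : ℕ} {E : Type*} [NormedAddCommGroup E] [NormedSpace ℝ E]
    (j : Fin m) (f : (Fin m → ℝ) → (Fin m → ℝ) → E) :
    (Fin m → ℝ) → (Fin m → ℝ) → E :=
  fun x u => fderiv ℝ (fun y => f y u) x (Pi.single j 1)

/-- Partial derivative `∂/∂u_j` of a function of two variables `(x, u)`. -/
noncomputable def pdu {m : ℕ} {E : Type*} [NormedAddCommGroup E] [NormedSpace ℝ E]
    (j : Fin m) (f : (Fin m → ℝ) → (Fin m → ℝ) → E) :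
    (Fin m → ℝ) → (Fin m → ℝ) → E :=
  fun x u => fderiv ℝ (fun v => f x v) u (Pi.single j 1)

/-- The Laplacian `Δ_x` in the variable `x`. -/
noncomputable def lapx {m : ℕ} {E : Type*} [NormedAddCommGroup E] [NormedSpace ℝ E]
    (f : (Fin m → ℝ) → (Fin m → ℝ) → E) : (Fin m → ℝ) → (Fin m → ℝ) → E :=
  fun x u => ∑ j, pdx j (pdx j f) x u

/-- The mixed operator `⟨∇_u, ∇_x⟩ = ∑ j, ∂_{u_j} ∂_{x_j}`. -/
noncomputable def mixDer {m : ℕ} {E : Type*} [NormedAddCommGroup E] [NormedSpace ℝ E]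
    (f : (Fin m → ℝ) → (Fin m → ℝ) → E) : (Fin m → ℝ) → (Fin m → ℝ) → E :=
  fun x u => ∑ j, pdu j (pdx j f) x u

/-- The Dirac operator `D_x = ∑ j, e j ∂_{x_j}` acting in the variable `x`. -/
noncomputable def diracx {m : ℕ} {Cl : Type*} [NormedRing Cl] [NormedAlgebra ℝ Cl]
    (e : Fin m → Cl) (f : (Fin m → ℝ) → (Fin m → ℝ) → Cl) :
    (Fin m → ℝ) → (Fin m → ℝ) → Cl :=
  fun x u => ∑ j, e j * pdx j f x u

/-- The Dirac operator `D_u = ∑ j, e j ∂_{u_j}` acting in the variable `u`. -/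
noncomputable def diracu {m : ℕ} {Cl : Type*} [NormedRing Cl] [NormedAlgebra ℝ Cl]
    (e : Fin m → Cl) (f : (Fin m → ℝ) → (Fin m → ℝ) → Cl) :
    (Fin m → ℝ) → (Fin m → ℝ) → Cl :=
  fun x u => ∑ j, e j * pdu j f x u

/-- The bosonic Laplacian (higher spin Laplace operator)
`D_k = Δ_x − 4⟨u,∇_x⟩⟨∇_u,∇_x⟩/(m+2k−2) + 4|u|²⟨∇_u,∇_x⟩²/((m+2k−2)(m+2k−4))`. -/
noncomputable def bosonic {m : ℕ} (k : ℕ) {E : Type*} [NormedAddCommGroup E]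
    [NormedSpace ℝ E] (f : (Fin m → ℝ) → (Fin m → ℝ) → E) :
    (Fin m → ℝ) → (Fin m → ℝ) → E :=
  fun x u =>
    lapx f x u
      - (4 / ((m : ℝ) + 2 * k - 2)) • ∑ s, u s • pdx s (mixDer f) x u
      + (4 / (((m : ℝ) + 2 * k - 2) * ((m : ℝ) + 2 * k - 4))) •
          ((∑ i, u i ^ 2) • mixDer (mixDer f) x u)

/-- The projection `P_k^+ = I + u D_u/(m+2k−2)` acting in the variable `u`
(`u` acts by left Clifford multiplication). -/
noncomputable def PpU {m : ℕ} {Cl : Type*} [NormedRing Cl] [NormedAlgebra ℝ Cl]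
    (e : Fin m → Cl) (k : ℕ) (f : (Fin m → ℝ) → (Fin m → ℝ) → Cl) :
    (Fin m → ℝ) → (Fin m → ℝ) → Cl :=
  fun x u => f x u + ((m : ℝ) + 2 * k - 2)⁻¹ • (emb e u * diracu e f x u)

/-- The projection `P_k^- = −u D_u/(m+2k−2)` acting in the variable `u`. -/
noncomputable def PmU {m : ℕ} {Cl : Type*} [NormedRing Cl] [NormedAlgebra ℝ Cl]
    (e : Fin m → Cl) (k : ℕ) (f : (Fin m → ℝ) → (Fin m → ℝ) → Cl) :
    (Fin m → ℝ) → (Fin m → ℝ) → Cl :=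
  fun x u => -(((m : ℝ) + 2 * k - 2)⁻¹ • (emb e u * diracu e f x u))

/-- `P_k^+ D_x`: this is the Rarita–Schwinger operator `R_k` on `C^∞(ℝ^m, M_k)` and the
twistor operator `T_k` on `C^∞(ℝ^m, uM_{k-1})`. -/
noncomputable def PpDx {m : ℕ} {Cl : Type*} [NormedRing Cl] [NormedAlgebra ℝ Cl]
    (e : Fin m → Cl) (k : ℕ) (f : (Fin m → ℝ) → (Fin m → ℝ) → Cl) :
    (Fin m → ℝ) → (Fin m → ℝ) → Cl :=
  PpU e k (diracx e f)

/-- `P_k^- D_x`: this is the dual twistor operator `T_k^*` on `C^∞(ℝ^m, M_k)` and the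
remaining operator `Q_k` on `C^∞(ℝ^m, uM_{k-1})`. -/
noncomputable def PmDx {m : ℕ} {Cl : Type*} [NormedRing Cl] [NormedAlgebra ℝ Cl]
    (e : Fin m → Cl) (k : ℕ) (f : (Fin m → ℝ) → (Fin m → ℝ) → Cl) :
    (Fin m → ℝ) → (Fin m → ℝ) → Cl :=
  PmU e k (diracx e f)

/-- Generators `L` of a Clifford algebra together with operators `a` (derivatives in `x`),
`b` (derivatives in `u`) and `μ` (multiplications by the coordinates of `u`) satisfying the
canonical commutation relations. -/
structure IsWeylClifford {m : ℕ} {R : Type*} [Ring R] (L a b μ : Fin m → R) : Prop where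
  anti : ∀ i j, L i * L j + L j * L i = if i = j then -2 else 0
  La : ∀ i j, Commute (L i) (a j)
  Lb : ∀ i j, Commute (L i) (b j)
  Lμ : ∀ i j, Commute (L i) (μ j)
  aa : ∀ i j, Commute (a i) (a j)
  ab : ∀ i j, Commute (a i) (b j)
  aμ : ∀ i j, Commute (a i) (μ j)
  bb : ∀ i j, Commute (b i) (b j)
  μμ : ∀ i j, Commute (μ i) (μ j)
  bμ : ∀ i j, b i * μ j = μ j * b i + if i = j then 1 else 0

/-- The contraction `∑ i, p i * q i`. -/
def contraction {m : ℕ} {R : Type*} [Ring R] (p q : Fin m → R) : R := ∑ i, p i * q i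

section Contraction

variable {m : ℕ} {R : Type*} [Ring R]

lemma contraction_anticomm_of_commute {L p q : Fin m → R}
    (hL : ∀ i j, L i * L j + L j * L i = if i = j then -2 else 0)
    (hp : ∀ i j, Commute (L i) (p j)) (hq : ∀ i j, Commute (L i) (q j))
    (hpq : ∀ i j, Commute (p i) (q j)) :
    contraction L p * contraction L q + contraction L q * contraction L p =
      -2 * contraction q p := by
  have key : ∀ i j, L i * p i * (L j * q j) + L j * q j * (L i * p i) =
      if i = j then -2 * (q i * p i) else 0 := by
    intro i j
    calc L i * p i * (L j * q j) + L j * q j * (L i * p i)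
        = L i * (p i * L j) * q j + L j * (q j * L i) * p i := by noncomm_ring
      _ = L i * L j * (p i * q j) + L j * L i * (q j * p i) := by
          rw [← (hp j i).eq, ← (hq i j).eq]; noncomm_ring
      _ = (L i * L j + L j * L i) * (q j * p i) := by
          rw [(hpq i j).eq]; noncomm_ring
      _ = _ := by
          rw [hL]; split_ifs with h
          · rw [h]
          · simp
  simp only [contraction, Finset.sum_mul_sum]
  rw [Finset.sum_comm (f := fun i j => L i * q i * (L j * p j)), ← Finset.sum_add_distrib,
    Finset.mul_sum]
  simp only [← Finset.sum_add_distrib, key]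
  simp

lemma contraction_anticomm_of_canonical {L p q : Fin m → R}
    (hL : ∀ i j, L i * L j + L j * L i = if i = j then -2 else 0)
    (hp : ∀ i j, Commute (L i) (p j)) (hq : ∀ i j, Commute (L i) (q j))
    (hpq : ∀ i j, p i * q j = q j * p i + if i = j then 1 else 0)
    (hsq : ∀ i, L i * L i = -1) :
    contraction L p * contraction L q + contraction L q * contraction L p =
      -2 * contraction q p - m := by
  have key : ∀ i j, L i * p i * (L j * q j) + L j * q j * (L i * p i) =
      if i = j then -2 * (q i * p i) - 1 else 0 := by
    intro i j
    calc L i * p i * (L j * q j) + L j * q j * (L i * p i)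
        = L i * (p i * L j) * q j + L j * (q j * L i) * p i := by noncomm_ring
      _ = L i * L j * (p i * q j) + L j * L i * (q j * p i) := by
          rw [← (hp j i).eq, ← (hq i j).eq]; noncomm_ring
      _ = (L i * L j + L j * L i) * (q j * p i) + L i * L j * (if i = j then 1 else 0) := by
          rw [hpq i j]; noncomm_ring
      _ = _ := by
          rw [hL]; split_ifs with h
          · subst h; rw [mul_one, hsq]; noncomm_ring
          · simp
  simp only [contraction, Finset.sum_mul_sum]
  rw [Finset.sum_comm (f := fun i j => L i * q i * (L j * p j)), ← Finset.sum_add_distrib,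
    Finset.mul_sum]
  simp only [← Finset.sum_add_distrib, key]
  simp [Finset.sum_sub_distrib]

lemma commute_contraction {c : R} {p q : Fin m → R} (hp : ∀ i, Commute c (p i))
    (hq : ∀ i, Commute c (q i)) : Commute c (contraction p q) :=
  Commute.sum_right _ _ _ fun i _ => (hp i).mul_right (hq i)

/-- The commutator with `c` passes to the right factor of a contraction. -/
lemma mul_contraction_of_commute_left {c : R} {p q r : Fin m → R} (hp : ∀ i, Commute c (p i))
    (hq : ∀ i, c * q i = q i * c + r i) :
    c * contraction p q = contraction p q * c + contraction p r := by
  simp only [contraction, Finset.mul_sum, Finset.sum_mul, ← Finset.sum_add_distrib]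
  refine Finset.sum_congr rfl fun i _ => ?_
  rw [← mul_assoc, (hp i).eq, mul_assoc, hq]
  noncomm_ring

/-- The commutator with `c` passes to the left factor of a contraction. -/
lemma mul_contraction_of_commute_right {c : R} {p q r : Fin m → R}
    (hp : ∀ i, c * p i = p i * c + r i) (hq : ∀ i, Commute c (q i)) :
    c * contraction p q = contraction p q * c + contraction r q := by
  simp only [contraction, Finset.mul_sum, Finset.sum_mul, ← Finset.sum_add_distrib]
  refine Finset.sum_congr rfl fun i _ => ?_
  rw [← mul_assoc, hp, add_mul, mul_assoc, (hq i).eq]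
  noncomm_ring

lemma contraction_mul_of_canonical_right {p q : Fin m → R} {d : Fin m} {x : R}
    (hq : ∀ i, q i * x = x * q i + if i = d then 1 else 0) (hp : ∀ i, Commute (p i) x) :
    contraction p q * x = x * contraction p q + p d := by
  have key : ∀ i, p i * q i * x = x * (p i * q i) + if i = d then p i else 0 := by
    intro i
    rw [mul_assoc, hq, mul_add, ← mul_assoc, (hp i).eq, mul_assoc]
    split_ifs <;> simp
  simp only [contraction, Finset.mul_sum, Finset.sum_mul, key, Finset.sum_add_distrib]
  simp

lemma commute_contraction_of_commute {c : R} {p q : Fin m → R} (hp : ∀ i, Commute (p i) c)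
    (hq : ∀ i, Commute (q i) c) : Commute (contraction p q) c :=
  (commute_contraction (fun i => (hp i).symm) fun i => (hq i).symm).symm

end Contraction

namespace IsWeylClifford

variable {m : ℕ} {R : Type*} [Ring R] {L a b μ : Fin m → R}

lemma diracu_vector (h : IsWeylClifford L a b μ) (hsq : ∀ i, L i * L i = -1) :
    contraction L b * contraction L μ =
      -(contraction L μ * contraction L b) - 2 * contraction μ b - m := by
  have := contraction_anticomm_of_canonical h.anti h.Lb h.Lμ h.bμ hsq
  rw [← sub_eq_zero] at this ⊢
  rw [← this]; noncomm_ring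

lemma diracx_vector (h : IsWeylClifford L a b μ) :
    contraction L a * contraction L μ =
      -(contraction L μ * contraction L a) - 2 * contraction μ a := by
  have := contraction_anticomm_of_commute h.anti h.La h.Lμ h.aμ
  rw [← sub_eq_zero] at this ⊢
  rw [← this]; noncomm_ring

lemma diracu_diracx (h : IsWeylClifford L a b μ) :
    contraction L b * contraction L a =
      -(contraction L a * contraction L b) - 2 * contraction b a := by
  have := contraction_anticomm_of_commute h.anti h.La h.Lb h.ab
  rw [← sub_eq_zero] at this ⊢
  rw [← this]; noncomm_ring

lemma euler_mul_coord (h : IsWeylClifford L a b μ) (i : Fin m) :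
    contraction μ b * μ i = μ i * contraction μ b + μ i :=
  contraction_mul_of_canonical_right (fun j => h.bμ j i) fun j => h.μμ j i

lemma euler_mul_deriv (h : IsWeylClifford L a b μ) (i : Fin m) :
    contraction μ b * b i = b i * contraction μ b + -b i := by
  have : b i * contraction μ b = contraction μ b * b i + b i := by
    rw [mul_contraction_of_commute_right (r := fun j => if i = j then 1 else 0)
      (fun j => h.bμ i j) fun j => h.bb i j]
    simp [contraction]
  rw [this]; abel

lemma diracu_symbol (h : IsWeylClifford L a b μ) :
    contraction L b * contraction μ a =
      contraction μ a * contraction L b + contraction L a := by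
  have key : ∀ i, contraction μ a * b i = b i * contraction μ a + -a i := by
    intro i
    have : b i * contraction μ a = contraction μ a * b i + a i := by
      rw [mul_contraction_of_commute_right (r := fun j => if i = j then 1 else 0)
        (fun j => h.bμ i j) fun j => (h.ab j i).symm]
      simp [contraction]
    rw [this]; abel
  have hs := mul_contraction_of_commute_left (c := contraction μ a) (p := L)
    (fun i => commute_contraction_of_commute (fun j => (h.Lμ i j).symm)
      fun j => (h.La i j).symm) key
  have hneg : contraction L (fun i => -a i) = -contraction L a := by simp [contraction]
  rw [hs, hneg]; abel

lemma diracx_sq (h : IsWeylClifford L a b μ) :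
    2 * (contraction L a * contraction L a) = -2 * contraction a a := by
  rw [← contraction_anticomm_of_commute h.anti h.La h.La h.aa]; noncomm_ring

lemma diracu_sq (h : IsWeylClifford L a b μ) :
    2 * (contraction L b * contraction L b) = -2 * contraction b b := by
  rw [← contraction_anticomm_of_commute h.anti h.Lb h.Lb h.bb]; noncomm_ring

lemma vector_sq (h : IsWeylClifford L a b μ) :
    2 * (contraction L μ * contraction L μ) = -2 * contraction μ μ := by
  rw [← contraction_anticomm_of_commute h.anti h.Lμ h.Lμ h.μμ]; noncomm_ring

lemma mix_diracx (h : IsWeylClifford L a b μ) :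
    Commute (contraction b a) (contraction L a) :=
  commute_contraction
    (fun i => commute_contraction_of_commute (fun j => (h.Lb i j).symm)
      fun j => (h.La i j).symm)
    fun i => commute_contraction_of_commute (fun j => (h.ab i j).symm) fun j => h.aa j i

lemma mix_diracu (h : IsWeylClifford L a b μ) :
    Commute (contraction b a) (contraction L b) :=
  commute_contraction
    (fun i => commute_contraction_of_commute (fun j => (h.Lb i j).symm)
      fun j => (h.La i j).symm)
    fun i => commute_contraction_of_commute (fun j => h.bb j i) fun j => h.ab j i

lemma symbol_diracx (h : IsWeylClifford L a b μ) :
    Commute (contraction μ a) (contraction L a) :=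
  commute_contraction
    (fun i => commute_contraction_of_commute (fun j => (h.Lμ i j).symm)
      fun j => (h.La i j).symm)
    fun i => commute_contraction_of_commute (fun j => (h.aμ i j).symm) fun j => h.aa j i

lemma symbol_vector (h : IsWeylClifford L a b μ) :
    Commute (contraction μ a) (contraction L μ) :=
  commute_contraction
    (fun i => commute_contraction_of_commute (fun j => (h.Lμ i j).symm)
      fun j => (h.La i j).symm)
    fun i => commute_contraction_of_commute (fun j => h.μμ j i) fun j => h.aμ j i

lemma euler_diracx (h : IsWeylClifford L a b μ) :
    Commute (contraction μ b) (contraction L a) :=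
  commute_contraction
    (fun i => commute_contraction_of_commute (fun j => (h.Lμ i j).symm)
      fun j => (h.Lb i j).symm)
    fun i => commute_contraction_of_commute (fun j => (h.aμ i j).symm)
      fun j => (h.ab i j).symm

lemma euler_vector (h : IsWeylClifford L a b μ) :
    contraction μ b * contraction L μ =
      contraction L μ * contraction μ b + contraction L μ :=
  mul_contraction_of_commute_left
    (fun i => commute_contraction_of_commute (fun j => (h.Lμ i j).symm)
      fun j => (h.Lb i j).symm) h.euler_mul_coord

lemma euler_symbol (h : IsWeylClifford L a b μ) :
    contraction μ b * contraction μ a =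
      contraction μ a * contraction μ b + contraction μ a :=
  mul_contraction_of_commute_right h.euler_mul_coord
    fun i => commute_contraction_of_commute (fun j => (h.aμ i j).symm)
      fun j => (h.ab i j).symm

lemma euler_diracu (h : IsWeylClifford L a b μ) :
    contraction μ b * contraction L b =
      contraction L b * contraction μ b - contraction L b := by
  rw [mul_contraction_of_commute_left
    (fun i => commute_contraction_of_commute (fun j => (h.Lμ i j).symm)
      fun j => (h.Lb i j).symm) h.euler_mul_deriv]
  simp [contraction, sub_eq_add_neg]

lemma euler_mix (h : IsWeylClifford L a b μ) :
    contraction μ b * contraction b a =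
      contraction b a * contraction μ b - contraction b a := by
  rw [mul_contraction_of_commute_right h.euler_mul_deriv
    fun i => commute_contraction_of_commute (fun j => (h.aμ i j).symm)
      fun j => (h.ab i j).symm]
  simp [contraction, sub_eq_add_neg]

end IsWeylClifford

/-- The algebraic form of the decomposition of the bosonic Laplacian: `U`, `A`, `X` are the
operators `u`, `D_u`, `D_x`, while `E`, `s`, `t` are `⟨u,∇_u⟩`, `⟨u,∇_x⟩`, `⟨∇_u,∇_x⟩`. -/
lemma bosonic_decomposition {V : Type*} [AddCommGroup V] [Module ℝ V]
    (U A X E s t : Module.End ℝ V) (m k : ℝ) (f : V)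
    (hN : m + 2 * k - 2 ≠ 0) (hN' : m + 2 * k - 4 ≠ 0)
    (AU : ∀ v, A (U v) = -U (A v) - (2 : ℝ) • E v - m • v)
    (XU : ∀ v, X (U v) = -U (X v) - (2 : ℝ) • s v)
    (AX : ∀ v, A (X v) = -X (A v) - (2 : ℝ) • t v)
    (As : ∀ v, A (s v) = s (A v) + X v)
    (tX : ∀ v, t (X v) = X (t v)) (At : ∀ v, A (t v) = t (A v))
    (Xs : ∀ v, X (s v) = s (X v)) (sU : ∀ v, s (U v) = U (s v))
    (EX : ∀ v, E (X v) = X (E v)) (EU : ∀ v, E (U v) = U (E v) + U v)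
    (Es : ∀ v, E (s v) = s (E v) + s v) (EA : ∀ v, E (A v) = A (E v) - A v)
    (Et : ∀ v, E (t v) = t (E v) - t v)
    (hE : E f = k • f) (hA : A (A f) = 0)
    (Pp Pm : V → V)
    (hPp : ∀ v, Pp v = v + (m + 2 * k - 2)⁻¹ • U (A v))
    (hPm : ∀ v, Pm v = -((m + 2 * k - 2)⁻¹ • U (A v))) :
    -X (X f) - (4 / (m + 2 * k - 2)) • s (t f)
        + (4 / ((m + 2 * k - 2) * (m + 2 * k - 4))) • (-U (U (t (t f)))) =
      -(Pp (X (Pp (X (Pp f)))))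
        + (2 / (m + 2 * k - 4)) • Pm (X (Pp (X (Pp f))))
        - (2 / (m + 2 * k - 4)) • Pp (X (Pm (X (Pm f))))
        - ((m + 2 * k) / (m + 2 * k - 4)) • Pm (X (Pm (X (Pm f)))) := by
  simp only [hPp, hPm, map_add, map_sub, map_neg, map_smul, AU, XU, AX, As, tX, At, Xs,
    sU, EX, EU, Es, EA, Et, hE, hA, map_zero]
  match_scalars <;> field_simp <;> ring

/-- The smooth functions of two variables. -/
def smoothTwoVar (m : ℕ) (E : Type*) [NormedAddCommGroup E] [NormedSpace ℝ E] :
    Submodule ℝ ((Fin m → ℝ) → (Fin m → ℝ) → E) where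
  carrier := {f | ContDiff ℝ (⊤ : ℕ∞) (fun p : (Fin m → ℝ) × (Fin m → ℝ) => f p.1 p.2)}
  zero_mem' := by
    rw [Set.mem_ofPred_eq]
    exact contDiff_const
  add_mem' hf hg := by
    rw [Set.mem_ofPred_eq] at hf hg ⊢
    exact hf.add hg
  smul_mem' c _ hf := by
    rw [Set.mem_ofPred_eq] at hf ⊢
    exact hf.const_smul c

section Smooth

variable {m : ℕ} {E : Type*} [NormedAddCommGroup E] [NormedSpace ℝ E]

lemma mem_smoothTwoVar {f : (Fin m → ℝ) → (Fin m → ℝ) → E} : f ∈ smoothTwoVar m E ↔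
    ContDiff ℝ (⊤ : ℕ∞) (fun p : (Fin m → ℝ) × (Fin m → ℝ) => f p.1 p.2) := Iff.rfl

lemma smoothTwoVar_hasFDerivAt {f : (Fin m → ℝ) → (Fin m → ℝ) → E} (hf : f ∈ smoothTwoVar m E)
    (p : (Fin m → ℝ) × (Fin m → ℝ)) :
    HasFDerivAt (fun p : (Fin m → ℝ) × (Fin m → ℝ) => f p.1 p.2)
      (fderiv ℝ (fun p : (Fin m → ℝ) × (Fin m → ℝ) => f p.1 p.2) p) p :=
  ((mem_smoothTwoVar.1 hf).differentiable (by simp) p).hasFDerivAt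

lemma smoothTwoVar_hasFDerivAt_left {f : (Fin m → ℝ) → (Fin m → ℝ) → E}
    (hf : f ∈ smoothTwoVar m E) (x u : Fin m → ℝ) :
    HasFDerivAt (fun y => f y u)
      ((fderiv ℝ (fun p : (Fin m → ℝ) × (Fin m → ℝ) => f p.1 p.2) (x, u)).comp
        (ContinuousLinearMap.inl ℝ _ _)) x :=
  (smoothTwoVar_hasFDerivAt hf (x, u)).comp (f := fun y => (y, u)) x
    (hasFDerivAt_prodMk_left (𝕜 := ℝ) x u)

lemma smoothTwoVar_hasFDerivAt_right {f : (Fin m → ℝ) → (Fin m → ℝ) → E}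
    (hf : f ∈ smoothTwoVar m E) (x u : Fin m → ℝ) :
    HasFDerivAt (f x)
      ((fderiv ℝ (fun p : (Fin m → ℝ) × (Fin m → ℝ) => f p.1 p.2) (x, u)).comp
        (ContinuousLinearMap.inr ℝ _ _)) u :=
  (smoothTwoVar_hasFDerivAt hf (x, u)).comp (f := fun v => (x, v)) u
    (hasFDerivAt_prodMk_right (𝕜 := ℝ) x u)

lemma pdx_apply {f : (Fin m → ℝ) → (Fin m → ℝ) → E} (hf : f ∈ smoothTwoVar m E) (j : Fin m)
    (x u : Fin m → ℝ) :
    pdx j f x u = fderiv ℝ (fun p : (Fin m → ℝ) × (Fin m → ℝ) => f p.1 p.2) (x, u)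
      (Pi.single j 1, 0) := by
  simp [pdx, (smoothTwoVar_hasFDerivAt_left hf x u).fderiv]

lemma pdu_apply {f : (Fin m → ℝ) → (Fin m → ℝ) → E} (hf : f ∈ smoothTwoVar m E) (j : Fin m)
    (x u : Fin m → ℝ) :
    pdu j f x u = fderiv ℝ (fun p : (Fin m → ℝ) × (Fin m → ℝ) => f p.1 p.2) (x, u)
      (0, Pi.single j 1) := by
  simp [pdu, (smoothTwoVar_hasFDerivAt_right hf x u).fderiv]

lemma pdx_mem {f : (Fin m → ℝ) → (Fin m → ℝ) → E} (hf : f ∈ smoothTwoVar m E) (j : Fin m) :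
    pdx j f ∈ smoothTwoVar m E := by
  rw [mem_smoothTwoVar]
  simp only [pdx_apply hf, Prod.mk.eta]
  exact ((mem_smoothTwoVar.1 hf).fderiv_right (by simp)).clm_apply contDiff_const

lemma pdu_mem {f : (Fin m → ℝ) → (Fin m → ℝ) → E} (hf : f ∈ smoothTwoVar m E) (j : Fin m) :
    pdu j f ∈ smoothTwoVar m E := by
  rw [mem_smoothTwoVar]
  simp only [pdu_apply hf, Prod.mk.eta]
  exact ((mem_smoothTwoVar.1 hf).fderiv_right (by simp)).clm_apply contDiff_const

/-- Directional derivatives of a smooth function commute. -/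
lemma fderiv_fderiv_apply_comm {F G : Type*} [NormedAddCommGroup F] [NormedSpace ℝ F]
    [NormedAddCommGroup G] [NormedSpace ℝ G] {g : F → G} (hg : ContDiff ℝ (⊤ : ℕ∞) g)
    (p v w : F) :
    fderiv ℝ (fun q => fderiv ℝ g q v) p w = fderiv ℝ (fun q => fderiv ℝ g q w) p v := by
  have hd : DifferentiableAt ℝ (fderiv ℝ g) p :=
    ((hg.fderiv_right (m := (⊤ : ℕ∞)) (by simp)).differentiable (by simp)) p
  have key : ∀ v w, fderiv ℝ (fun q => fderiv ℝ g q v) p w = fderiv ℝ (fderiv ℝ g) p w v := by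
    intro v w
    rw [fderiv_clm_apply hd (differentiableAt_const v)]
    simp
  rw [key, key]
  have h2 : ContDiffAt ℝ 2 g p := (contDiff_infty.1 hg 2).contDiffAt
  exact (h2.isSymmSndFDerivAt (by simp)).eq w v

lemma pdx_comm {f : (Fin m → ℝ) → (Fin m → ℝ) → E} (hf : f ∈ smoothTwoVar m E)
    (i j : Fin m) : pdx i (pdx j f) = pdx j (pdx i f) := by
  funext x u
  rw [pdx_apply (pdx_mem hf j), pdx_apply (pdx_mem hf i)]
  simp only [pdx_apply hf, Prod.mk.eta]
  exact fderiv_fderiv_apply_comm (mem_smoothTwoVar.1 hf) _ _ _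

lemma pdu_comm {f : (Fin m → ℝ) → (Fin m → ℝ) → E} (hf : f ∈ smoothTwoVar m E)
    (i j : Fin m) : pdu i (pdu j f) = pdu j (pdu i f) := by
  funext x u
  rw [pdu_apply (pdu_mem hf j), pdu_apply (pdu_mem hf i)]
  simp only [pdu_apply hf, Prod.mk.eta]
  exact fderiv_fderiv_apply_comm (mem_smoothTwoVar.1 hf) _ _ _

lemma pdx_pdu_comm {f : (Fin m → ℝ) → (Fin m → ℝ) → E} (hf : f ∈ smoothTwoVar m E)
    (i j : Fin m) : pdx i (pdu j f) = pdu j (pdx i f) := by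
  funext x u
  rw [pdx_apply (pdu_mem hf j), pdu_apply (pdx_mem hf i)]
  simp only [pdx_apply hf, pdu_apply hf, Prod.mk.eta]
  exact fderiv_fderiv_apply_comm (mem_smoothTwoVar.1 hf) _ _ _

/-- `∂/∂x_j` as an endomorphism of the smooth functions. -/
noncomputable def pdxEnd (m : ℕ) (E : Type*) [NormedAddCommGroup E] [NormedSpace ℝ E]
    (j : Fin m) : Module.End ℝ (smoothTwoVar m E) where
  toFun f := ⟨pdx j f.1, pdx_mem f.2 j⟩
  map_add' f g := by
    ext x u
    have h := (smoothTwoVar_hasFDerivAt_left f.2 x u).add (smoothTwoVar_hasFDerivAt_left g.2 x u)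
    simp only [pdx, Submodule.coe_add, Pi.add_apply,
      (smoothTwoVar_hasFDerivAt_left f.2 x u).fderiv,
      (smoothTwoVar_hasFDerivAt_left g.2 x u).fderiv]
    exact congrArg (fun l => l (Pi.single j 1)) h.fderiv
  map_smul' c f := by
    ext x u
    have h := (smoothTwoVar_hasFDerivAt_left f.2 x u).const_smul c
    simp only [pdx, Submodule.coe_smul, Pi.smul_apply, RingHom.id_apply,
      (smoothTwoVar_hasFDerivAt_left f.2 x u).fderiv]
    exact congrArg (fun l => l (Pi.single j 1)) h.fderiv

/-- `∂/∂u_j` as an endomorphism of the smooth functions. -/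
noncomputable def pduEnd (m : ℕ) (E : Type*) [NormedAddCommGroup E] [NormedSpace ℝ E]
    (j : Fin m) : Module.End ℝ (smoothTwoVar m E) where
  toFun f := ⟨pdu j f.1, pdu_mem f.2 j⟩
  map_add' f g := by
    ext x u
    have h := (smoothTwoVar_hasFDerivAt_right f.2 x u).add
      (smoothTwoVar_hasFDerivAt_right g.2 x u)
    simp only [pdu, Submodule.coe_add, Pi.add_apply,
      (smoothTwoVar_hasFDerivAt_right f.2 x u).fderiv,
      (smoothTwoVar_hasFDerivAt_right g.2 x u).fderiv]
    exact congrArg (fun l => l (Pi.single j 1)) h.fderiv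
  map_smul' c f := by
    ext x u
    have h := (smoothTwoVar_hasFDerivAt_right f.2 x u).const_smul c
    simp only [pdu, Submodule.coe_smul, Pi.smul_apply, RingHom.id_apply,
      (smoothTwoVar_hasFDerivAt_right f.2 x u).fderiv]
    exact congrArg (fun l => l (Pi.single j 1)) h.fderiv

/-- Multiplication by the coordinate `u_j` as an endomorphism of the smooth functions. -/
noncomputable def coordEnd (m : ℕ) (E : Type*) [NormedAddCommGroup E] [NormedSpace ℝ E]
    (j : Fin m) : Module.End ℝ (smoothTwoVar m E) where
  toFun f := ⟨fun x u => u j • f.1 x u,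
    mem_smoothTwoVar.2 <| by
      have := mem_smoothTwoVar.1 f.2
      fun_prop⟩
  map_add' f g := by ext x u; simp
  map_smul' c f := by ext x u; simp [smul_comm c]

/-- Left multiplication by `c` as an endomorphism of the smooth functions. -/
noncomputable def leftMulEnd (m : ℕ) {Cl : Type*} [NormedRing Cl] [NormedAlgebra ℝ Cl]
    (c : Cl) : Module.End ℝ (smoothTwoVar m Cl) where
  toFun f := ⟨fun x u => c * f.1 x u, mem_smoothTwoVar.2 (contDiff_const.mul (mem_smoothTwoVar.1 f.2))⟩
  map_add' f g := by ext x u; simp [mul_add]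
  map_smul' r f := by ext x u; simp

lemma coe_pdxEnd (j : Fin m) (f : smoothTwoVar m E) : (pdxEnd m E j f).1 = pdx j f.1 := rfl

lemma coe_pduEnd (j : Fin m) (f : smoothTwoVar m E) : (pduEnd m E j f).1 = pdu j f.1 := rfl

lemma coe_coordEnd (j : Fin m) (f : smoothTwoVar m E) :
    (coordEnd m E j f).1 = fun x u => u j • f.1 x u := rfl

lemma coe_leftMulEnd {Cl : Type*} [NormedRing Cl] [NormedAlgebra ℝ Cl] (c : Cl)
    (f : smoothTwoVar m Cl) : (leftMulEnd m c f).1 = fun x u => c * f.1 x u := rfl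

lemma contraction_apply_coe (p q : Fin m → Module.End ℝ (smoothTwoVar m E))
    (f : smoothTwoVar m E) (x u : Fin m → ℝ) :
    (contraction p q f).1 x u = ∑ i, (p i (q i f)).1 x u := by
  simp [contraction]

/-- Euler's identity for homogeneous polynomials. -/
lemma IsHomPoly.euler {k : ℕ} {g : (Fin m → ℝ) → E} (hg : IsHomPoly k g) {u : Fin m → ℝ}
    (hd : DifferentiableAt ℝ g u) : ∑ j, u j • fderiv ℝ g u (Pi.single j 1) = (k : ℝ) • g u := by
  have hhom : ∀ c : ℝ, g (c • u) = c ^ k • g u := by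
    intro c
    clear hd
    induction hg using Submodule.span_induction with
    | mem g hg =>
      obtain ⟨α, d, rfl, rfl⟩ := hg
      simp [mul_pow, Finset.prod_mul_distrib, Finset.prod_pow_eq_pow_sum, mul_smul]
    | zero => simp
    | add g h _ _ ihg ihh => simp [ihg, ihh]
    | smul r g _ ih => simp [ih, smul_comm r]
  have hline : HasDerivAt (fun c : ℝ => c • u) u 1 := by
    simpa using (hasDerivAt_id (1 : ℝ)).smul_const u
  have hcomp : HasDerivAt (fun c : ℝ => g (c • u)) (fderiv ℝ g u u) 1 :=
    HasFDerivAt.comp_hasDerivAt (l := g) (f := fun c : ℝ => c • u) 1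
      (by simpa using hd.hasFDerivAt) hline
  have hpow : HasDerivAt (fun c : ℝ => g (c • u)) ((k : ℝ) • g u) 1 := by
    simp only [hhom]
    simpa using (hasDerivAt_pow k (1 : ℝ)).smul_const (g u)
  calc ∑ j, u j • fderiv ℝ g u (Pi.single j 1)
      = fderiv ℝ g u (∑ j, u j • Pi.single j 1) := by simp only [map_sum, map_smul]
    _ = (k : ℝ) • g u := by rw [← pi_eq_sum_univ', hpow.unique hcomp]

lemma mixDer_coe (f : smoothTwoVar m E) :
    mixDer f.1 = (contraction (pduEnd m E) (pdxEnd m E) f).1 := by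
  funext x u
  simp [mixDer, contraction_apply_coe, coe_pduEnd, coe_pdxEnd]

lemma lapx_coe (f : smoothTwoVar m E) :
    lapx f.1 = (contraction (pdxEnd m E) (pdxEnd m E) f).1 := by
  funext x u
  simp [lapx, contraction_apply_coe, coe_pdxEnd]

lemma bosonic_coe (k : ℕ) (f : smoothTwoVar m E) :
    bosonic k f.1 = (contraction (pdxEnd m E) (pdxEnd m E) f
      - (4 / ((m : ℝ) + 2 * k - 2)) • contraction (coordEnd m E) (pdxEnd m E)
          (contraction (pduEnd m E) (pdxEnd m E) f)
      + (4 / (((m : ℝ) + 2 * k - 2) * ((m : ℝ) + 2 * k - 4))) •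
          contraction (coordEnd m E) (coordEnd m E)
            (contraction (pduEnd m E) (pdxEnd m E)
              (contraction (pduEnd m E) (pdxEnd m E) f))).1 := by
  funext x u
  simp only [bosonic, mixDer_coe, lapx_coe, Submodule.coe_add, Submodule.coe_sub,
    Submodule.coe_smul, Pi.add_apply, Pi.sub_apply, Pi.smul_apply]
  congr 2
  · simp only [contraction_apply_coe (coordEnd m E) (pdxEnd m E), coe_coordEnd, coe_pdxEnd]
  · simp only [contraction_apply_coe (coordEnd m E) (coordEnd m E), coe_coordEnd, smul_smul,
      Finset.sum_smul, pow_two]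

end Smooth

lemma CliffordRel.sq {m : ℕ} {Cl : Type*} [Ring Cl] [Algebra ℝ Cl] {e : Fin m → Cl}
    (h : CliffordRel e) (i : Fin m) : e i * e i = -1 := by
  have h2 : (2 : ℝ) • (e i * e i) = (2 : ℝ) • (-1 : Cl) := by
    have := h i i
    rw [if_pos rfl, Algebra.algebraMap_eq_smul_one] at this
    rw [two_smul, this]; module
  exact smul_right_injective _ two_ne_zero h2

lemma isWeylClifford_smoothTwoVar {m : ℕ} {Cl : Type*} [NormedRing Cl] [NormedAlgebra ℝ Cl]
    {e : Fin m → Cl} (h : CliffordRel e) :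
    IsWeylClifford (fun i => leftMulEnd m (e i)) (pdxEnd m Cl) (pduEnd m Cl) (coordEnd m Cl) where
  anti i j := by
    ext f x u
    have := congrArg (· * f.1 x u) (h i j)
    simp only [add_mul, mul_assoc] at this
    simp only [LinearMap.add_apply, Module.End.mul_apply, Submodule.coe_add, coe_leftMulEnd,
      Pi.add_apply, this]
    split_ifs
    · have h2 : (-2 : Module.End ℝ (smoothTwoVar m Cl)) f = (-2 : ℝ) • f := by
        rw [show (-2 : Module.End ℝ (smoothTwoVar m Cl)) = -(1 + 1) by norm_num]
        simp only [LinearMap.neg_apply, LinearMap.add_apply, Module.End.one_apply]; module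
      rw [h2, Algebra.algebraMap_eq_smul_one]; simp
    · simp
  La i j := by
    ext f x u
    simp only [Module.End.mul_apply, coe_leftMulEnd, coe_pdxEnd, pdx]
    rw [((smoothTwoVar_hasFDerivAt_left f.2 x u).const_mul (e i)).fderiv,
      (smoothTwoVar_hasFDerivAt_left f.2 x u).fderiv]
    simp
  Lb i j := by
    ext f x u
    simp only [Module.End.mul_apply, coe_leftMulEnd, coe_pduEnd, pdu]
    rw [((smoothTwoVar_hasFDerivAt_right f.2 x u).const_mul (e i)).fderiv,
      (smoothTwoVar_hasFDerivAt_right f.2 x u).fderiv]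
    simp
  Lμ i j := by
    ext f x u
    simp [coe_leftMulEnd, coe_coordEnd]
  aa i j := by
    ext f x u
    simp only [Module.End.mul_apply, coe_pdxEnd, pdx_comm f.2 i j]
  ab i j := by
    ext f x u
    simp only [Module.End.mul_apply, coe_pdxEnd, coe_pduEnd, pdx_pdu_comm f.2 i j]
  aμ i j := by
    ext f x u
    simp only [Module.End.mul_apply, coe_coordEnd, coe_pdxEnd, pdx]
    rw [((smoothTwoVar_hasFDerivAt_left f.2 x u).fun_const_smul (u j)).fderiv,
      (smoothTwoVar_hasFDerivAt_left f.2 x u).fderiv]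
    simp
  bb i j := by
    ext f x u
    simp only [Module.End.mul_apply, coe_pduEnd, pdu_comm f.2 i j]
  μμ i j := by
    ext f x u
    simp [coe_coordEnd, smul_smul, mul_comm]
  bμ i j := by
    ext f x u
    have hc : HasFDerivAt (fun v : Fin m → ℝ => v j)
      (ContinuousLinearMap.proj (R := ℝ) (φ := fun _ : Fin m => ℝ) j) u :=
      hasFDerivAt_apply j u
    simp only [Module.End.mul_apply, LinearMap.add_apply, Submodule.coe_add, Pi.add_apply,
      coe_coordEnd, coe_pduEnd, pdu]
    rw [(hc.fun_smul (smoothTwoVar_hasFDerivAt_right f.2 x u)).fderiv,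
      (smoothTwoVar_hasFDerivAt_right f.2 x u).fderiv]
    by_cases hij : i = j
    · subst hij; simp
    · simp [hij, Ne.symm hij]

section Dirac

variable {m : ℕ} {Cl : Type*} [NormedRing Cl] [NormedAlgebra ℝ Cl]

lemma diracx_coe (e : Fin m → Cl) (f : smoothTwoVar m Cl) :
    diracx e f.1 = (contraction (fun i => leftMulEnd m (e i)) (pdxEnd m Cl) f).1 := by
  funext x u
  simp [diracx, contraction_apply_coe, coe_pdxEnd, coe_leftMulEnd]

lemma diracu_coe (e : Fin m → Cl) (f : smoothTwoVar m Cl) :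
    diracu e f.1 = (contraction (fun i => leftMulEnd m (e i)) (pduEnd m Cl) f).1 := by
  funext x u
  simp [diracu, contraction_apply_coe, coe_pduEnd, coe_leftMulEnd]

lemma emb_mul_coe (e : Fin m → Cl) (f : smoothTwoVar m Cl) (x u : Fin m → ℝ) :
    emb e u * f.1 x u =
      (contraction (fun i => leftMulEnd m (e i)) (coordEnd m Cl) f).1 x u := by
  simp [emb, contraction_apply_coe, coe_coordEnd, coe_leftMulEnd, Finset.sum_mul]

lemma PpU_coe (e : Fin m → Cl) (k : ℕ) (f : smoothTwoVar m Cl) :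
    PpU e k f.1 = (f + ((m : ℝ) + 2 * k - 2)⁻¹ •
      contraction (fun i => leftMulEnd m (e i)) (coordEnd m Cl)
        (contraction (fun i => leftMulEnd m (e i)) (pduEnd m Cl) f)).1 := by
  funext x u
  simp only [PpU, diracu_coe, emb_mul_coe, Submodule.coe_add, Submodule.coe_smul, Pi.add_apply,
    Pi.smul_apply]

lemma PmU_coe (e : Fin m → Cl) (k : ℕ) (f : smoothTwoVar m Cl) :
    PmU e k f.1 = (-(((m : ℝ) + 2 * k - 2)⁻¹ •
      contraction (fun i => leftMulEnd m (e i)) (coordEnd m Cl)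
        (contraction (fun i => leftMulEnd m (e i)) (pduEnd m Cl) f))).1 := by
  funext x u
  simp only [PmU, diracu_coe, emb_mul_coe, Submodule.coe_neg, Submodule.coe_smul, Pi.neg_apply,
    Pi.smul_apply]

/-- Cancelling the factor `2` in an identity between endomorphisms of a real vector space. -/
lemma apply_eq_neg_of_two_mul {V : Type*} [AddCommGroup V] [Module ℝ V] {S T : Module.End ℝ V}
    (h : 2 * S = -2 * T) (v : V) : S v = -T v := by
  have h' := LinearMap.congr_fun h v
  rw [two_mul, neg_mul, two_mul] at h'
  simp only [LinearMap.add_apply, LinearMap.neg_apply] at h'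
  refine smul_right_injective V (two_ne_zero (α := ℝ)) ?_
  simp only [two_smul, h']
  abel

end Dirac

/-- **Theorem 1, first identity.** For `m ≥ 3`, `k ≥ 1` and smooth
`f : ℝ^m × ℝ^m → Cl_m` with `f(x,·) ∈ H_k` for each `x`,
`D_k f = −R_k² P_k^+ f + (2/(m+2k−4)) T_k^* R_k P_k^+ f − (2/(m+2k−4)) T_k Q_k P_k^- f
− ((m+2k)/(m+2k−4)) Q_k² P_k^- f`, where `P_k^±` act in `u` and `D_x` acts in `x`. -/
theorem stmt9 {m k : ℕ} (hm : 3 ≤ m) (hk : 1 ≤ k) {Cl : Type*} [NormedRing Cl]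
    [NormedAlgebra ℝ Cl] (e : Fin m → Cl) (hrel : CliffordRel e)
    (f : (Fin m → ℝ) → (Fin m → ℝ) → Cl)
    (hf : ContDiff ℝ (⊤ : ℕ∞) (fun p : (Fin m → ℝ) × (Fin m → ℝ) => f p.1 p.2))
    (hfu : ∀ x, IsHomPoly k (f x) ∧ lap (f x) = 0) :
    ∀ x u, bosonic k f x u =
        -(PpDx e k (PpDx e k (PpU e k f)) x u)
          + (2 / ((m : ℝ) + 2 * k - 4)) • PmDx e k (PpDx e k (PpU e k f)) x u
          - (2 / ((m : ℝ) + 2 * k - 4)) • PpDx e k (PmDx e k (PmU e k f)) x u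
          - (((m : ℝ) + 2 * k) / ((m : ℝ) + 2 * k - 4)) •
              PmDx e k (PmDx e k (PmU e k f)) x u := by
  have h := isWeylClifford_smoothTwoVar hrel
  have hm' : (3 : ℝ) ≤ m := by exact_mod_cast hm
  have hk' : (1 : ℝ) ≤ k := by exact_mod_cast hk
  have hsq : ∀ i, leftMulEnd m (e i) * leftMulEnd m (e i) = -1 := by
    intro i
    ext g x u
    simp [coe_leftMulEnd, ← mul_assoc, hrel.sq i]
  set F : smoothTwoVar m Cl := ⟨f, mem_smoothTwoVar.2 hf⟩
  have hfF : f = F.1 := rfl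
  set L : Fin m → Module.End ℝ (smoothTwoVar m Cl) := fun i => leftMulEnd m (e i)
  have hE : contraction (coordEnd m Cl) (pduEnd m Cl) F = (k : ℝ) • F := by
    ext x u
    rw [contraction_apply_coe]
    exact (hfu x).1.euler (smoothTwoVar_hasFDerivAt_right F.2 x u).differentiableAt
  have hΔ : contraction (pduEnd m Cl) (pduEnd m Cl) F = 0 := by
    ext x u
    rw [contraction_apply_coe]
    exact congrFun (hfu x).2 u
  have two_apply : ∀ (T : Module.End ℝ (smoothTwoVar m Cl)) v,
      ((2 : Module.End ℝ (smoothTwoVar m Cl)) * T) v = (2 : ℝ) • T v := by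
    intro T v
    rw [two_mul, LinearMap.add_apply, two_smul]
  have natCast_apply : ∀ v, (m : Module.End ℝ (smoothTwoVar m Cl)) v = (m : ℝ) • v := by
    intro v
    rw [Module.End.natCast_apply, Nat.cast_smul_eq_nsmul]
  have main := bosonic_decomposition (contraction L (coordEnd m Cl))
    (contraction L (pduEnd m Cl)) (contraction L (pdxEnd m Cl))
    (contraction (coordEnd m Cl) (pduEnd m Cl)) (contraction (coordEnd m Cl) (pdxEnd m Cl))
    (contraction (pduEnd m Cl) (pdxEnd m Cl)) m k F (by linarith) (by linarith)
    (fun v => by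
      simpa only [LinearMap.sub_apply, LinearMap.neg_apply, Module.End.mul_apply, two_apply,
        natCast_apply] using LinearMap.congr_fun (h.diracu_vector hsq) v)
    (fun v => by
      simpa only [LinearMap.sub_apply, LinearMap.neg_apply, Module.End.mul_apply, two_apply]
        using LinearMap.congr_fun h.diracx_vector v)
    (fun v => by
      simpa only [LinearMap.sub_apply, LinearMap.neg_apply, Module.End.mul_apply, two_apply]
        using LinearMap.congr_fun h.diracu_diracx v)
    (LinearMap.congr_fun h.diracu_symbol)
    (LinearMap.congr_fun h.mix_diracx.eq)
    (LinearMap.congr_fun h.mix_diracu.eq.symm)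
    (LinearMap.congr_fun h.symbol_diracx.eq.symm)
    (LinearMap.congr_fun h.symbol_vector.eq)
    (LinearMap.congr_fun h.euler_diracx.eq)
    (LinearMap.congr_fun h.euler_vector)
    (LinearMap.congr_fun h.euler_symbol)
    (LinearMap.congr_fun h.euler_diracu)
    (LinearMap.congr_fun h.euler_mix)
    hE ((apply_eq_neg_of_two_mul h.diracu_sq F).trans (by rw [hΔ, neg_zero]))
    _ _ (fun _ => rfl) (fun _ => rfl)
  rw [show contraction L (pdxEnd m Cl) (contraction L (pdxEnd m Cl) F) =
      -contraction (pdxEnd m Cl) (pdxEnd m Cl) F from apply_eq_neg_of_two_mul h.diracx_sq F,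
    show ∀ v, contraction L (coordEnd m Cl) (contraction L (coordEnd m Cl) v) =
      -contraction (coordEnd m Cl) (coordEnd m Cl) v from apply_eq_neg_of_two_mul h.vector_sq,
    neg_neg, neg_neg] at main
  intro x u
  have key := congrArg (fun G : smoothTwoVar m Cl => G.1 x u) main
  rw [hfF, bosonic_coe]
  simp only [PpDx, PmDx, PpU_coe, PmU_coe, diracx_coe]
  exact key
end

section
/- (Theorem 1, second identity) Let m ≥ 3 and k ≥ 1, and let f: ℝ^m × ℝ^m → Cl_m be smooth with f(x,·) ∈ H_k for each fixed x. Then D_k f = −R_k² P_k^+ f + (2/(m+2k−4)) R_k T_k P_k^− f − (2/(m+2k−4)) Q_k T_k^* P_k^+ f − ((m+2k)/(m+2k−4)) Q_k² P_k^− f, where all projections P_k^± act in the variable u and all operators D_x act in the variable x. -/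
open scoped BigOperators

/-! ### Commutation relations of Dirac-type operators in an abstract algebra -/

section DiracRelations

variable {m : ℕ} {A : Type*} [Ring A] [Algebra ℝ A]

/-- The anticommutator of two vector operators `∑ i, a i * b i` and `∑ i, a i * c i`, where the
`a i` are Clifford generators and `[b i, c j] = κ δ_{ij}`. -/
lemma anticomm_sum {a b c : Fin m → A} {κ : ℝ} (ha : CliffordRel a)
    (hab : ∀ i j, Commute (a i) (b j)) (hac : ∀ i j, Commute (a i) (c j))
    (hbc : ∀ i j, b i * c j = c j * b i + algebraMap ℝ A (if i = j then κ else 0)) :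
    (∑ i, a i * b i) * (∑ j, a j * c j) + (∑ j, a j * c j) * (∑ i, a i * b i)
      = (-2 : ℝ) • ∑ i, c i * b i - algebraMap ℝ A (m * κ) := by
  have hsq : ∀ i, a i * a i = -1 := by
    intro i
    have h := ha i i
    rw [if_pos rfl, ← two_smul ℝ (a i * a i)] at h
    have h2 : (2 : ℝ) • (a i * a i) = (2 : ℝ) • (-1 : A) := by
      rw [h, Algebra.algebraMap_eq_smul_one]; module
    exact smul_right_injective A (two_ne_zero' ℝ) h2
  rw [Finset.sum_mul_sum, Finset.sum_mul_sum,
    Finset.sum_comm (f := fun i j => a i * c i * (a j * b j)), ← Finset.sum_add_distrib]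
  have key : ∀ i j, a i * b i * (a j * c j) + a j * c j * (a i * b i)
      = (if i = j then (-2 : ℝ) • (c j * b i) else 0)
        - (if i = j then algebraMap ℝ A κ else 0) := by
    intro i j
    have h1 : a i * b i * (a j * c j)
        = a i * a j * (c j * b i) + a i * a j * algebraMap ℝ A (if i = j then κ else 0) := by
      rw [← mul_add, ← hbc i j, mul_assoc, ← mul_assoc (b i), ← (hab j i).eq]
      noncomm_ring
    have h2 : a j * c j * (a i * b i) = a j * a i * (c j * b i) := by
      rw [mul_assoc, ← mul_assoc (c j), ← (hac i j).eq]
      noncomm_ring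
    rw [h1, h2, add_right_comm, ← add_mul, ha i j]
    by_cases h : i = j
    · subst h
      simp only [if_true, hsq]
      rw [← Algebra.smul_def]
      noncomm_ring
    · simp [h]
  simp_rw [← Finset.sum_add_distrib, key, Finset.sum_sub_distrib, Finset.sum_ite_eq,
    Finset.mem_univ, if_true, ← Finset.smul_sum]
  simp

/-- The commutator of a vector operator `∑ i, a i * b i` with a scalar operator `∑ i, c i * g i`,
where `[b i, c j] = κ δ_{ij}`. -/
lemma comm_sum {a b c g : Fin m → A} {κ : ℝ}
    (hac : ∀ i j, Commute (a i) (c j)) (hag : ∀ i j, Commute (a i) (g j))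
    (hbg : ∀ i j, Commute (b i) (g j))
    (hbc : ∀ i j, b i * c j = c j * b i + algebraMap ℝ A (if i = j then κ else 0)) :
    (∑ i, a i * b i) * (∑ j, c j * g j)
      = (∑ j, c j * g j) * (∑ i, a i * b i) + κ • ∑ i, a i * g i := by
  rw [Finset.sum_mul_sum, Finset.sum_mul_sum,
    Finset.sum_comm (f := fun i j => c i * g i * (a j * b j))]
  have key : ∀ i j, a i * b i * (c j * g j)
      = c j * g j * (a i * b i) + (if i = j then κ • (a i * g j) else 0) := by
    intro i j
    have h1 : a i * b i * (c j * g j)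
        = a i * (c j * b i) * g j + a i * algebraMap ℝ A (if i = j then κ else 0) * g j := by
      rw [← add_mul, ← mul_add, ← hbc i j]
      noncomm_ring
    have h2 : a i * (c j * b i) * g j = c j * g j * (a i * b i) := by
      calc a i * (c j * b i) * g j = (a i * c j) * (b i * g j) := by noncomm_ring
        _ = (c j * a i) * (g j * b i) := by rw [(hac i j).eq, (hbg i j).eq]
        _ = c j * (a i * g j) * b i := by noncomm_ring
        _ = c j * g j * (a i * b i) := by rw [(hag i j).eq]; noncomm_ring
    rw [h1, h2]
    by_cases h : i = j
    · subst h
      simp [Algebra.algebraMap_eq_smul_one]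
    · simp [h]
  simp_rw [key, Finset.sum_add_distrib, Finset.sum_ite_eq, Finset.mem_univ, if_true,
    ← Finset.smul_sum]

end DiracRelations

/-! ### The identity for abstract operators -/

/-- The operator identity behind the decomposition of the bosonic Laplacian: `u`, `D`, `d` model
`u`, `D_x`, `D_u`, while `E`, `S`, `M` model the Euler operator, `⟨u, ∇_x⟩` and
`⟨∇_u, ∇_x⟩`. -/
lemma bosonic_decomposition_of_relations {V : Type*} [AddCommGroup V] [Module ℝ V]
    {u D d E S M : V →ₗ[ℝ] V} {m k c : ℝ} (hc : c = m + 2 * k - 2) (hc0 : c ≠ 0)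
    (hc2 : c - 2 ≠ 0)
    (hdu : ∀ w, d (u w) = -u (d w) - (2 : ℝ) • E w - m • w)
    (hDu : ∀ w, D (u w) = -u (D w) - (2 : ℝ) • S w)
    (hdD : ∀ w, d (D w) = -D (d w) - (2 : ℝ) • M w)
    (hdS : ∀ w, d (S w) = S (d w) + D w)
    (hDS : ∀ w, D (S w) = S (D w))
    (hSu : ∀ w, S (u w) = u (S w))
    (hdM : ∀ w, d (M w) = M (d w))
    (hMD : ∀ w, M (D w) = D (M w))
    (hED : ∀ w, E (D w) = D (E w))
    (hEd : ∀ w, E (d w) = d (E w) - d w)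
    (hEu : ∀ w, E (u w) = u (E w) + u w)
    {P N : V → V} (hP : ∀ w, P w = w + c⁻¹ • u (d w)) (hN : ∀ w, N w = -(c⁻¹ • u (d w)))
    {f : V} (hEf : E f = k • f) (hdf : d (d f) = 0) :
    -D (D f) - (4 / c) • S (M f) - (4 / (c * (c - 2))) • u (u (M (M f)))
      = -P (D (P (D (P f)))) + (2 / (c - 2)) • P (D (P (D (N f))))
        - (2 / (c - 2)) • N (D (N (D (P f))))
        - ((c + 2) / (c - 2)) • N (D (N (D (N f)))) := by
  have hS : ∀ w, S w = (-(1 / 2) : ℝ) • (D (u w) + u (D w)) := fun w => by rw [hDu]; module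
  have hM : ∀ w, M w = (-(1 / 2) : ℝ) • (D (d w) + d (D w)) := fun w => by rw [hdD]; module
  have hES : ∀ w, E (S w) = S (E w) + S w := fun w => by
    simp only [hS, map_smul, map_add, hED, hEu]; module
  have hEM : ∀ w, E (M w) = M (E w) - M w := fun w => by
    simp only [hM, map_smul, map_add, map_sub, hED, hEd]; module
  have hm : m = c + 2 - 2 * k := by rw [hc]; ring
  subst hm
  simp only [hP, hN, map_add, map_sub, map_neg, map_smul, map_zero, hdu, hDu, hdD, hdS, hDS, hSu,
    hdM, hMD, hED, hEd, hEu, hES, hEM, hEf, hdf, neg_zero]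
  match_scalars <;> field_simp <;> ring

/-! ### Smooth functions of two vector variables -/

section SmoothFunctions

variable {m : ℕ} {Cl : Type*} [NormedRing Cl] [NormedAlgebra ℝ Cl]

/-- The space of smooth functions of `(x, u)`. -/
def smoothFun (m : ℕ) (Cl : Type*) [NormedRing Cl] [NormedAlgebra ℝ Cl] :
    Submodule ℝ ((Fin m → ℝ) → (Fin m → ℝ) → Cl) where
  carrier := {f | ContDiff ℝ (⊤ : ℕ∞) (fun p : (Fin m → ℝ) × (Fin m → ℝ) => f p.1 p.2)}
  add_mem' := by
    intro f g hf hg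
    rw [Set.mem_ofPred_eq] at *
    exact hf.add hg
  zero_mem' := by
    rw [Set.mem_ofPred_eq]
    exact contDiff_const
  smul_mem' := by
    intro c f hf
    rw [Set.mem_ofPred_eq] at *
    exact hf.const_smul c

lemma contDiff_smoothFun (f : smoothFun m Cl) :
    ContDiff ℝ (⊤ : ℕ∞) (fun p : (Fin m → ℝ) × (Fin m → ℝ) => f.1 p.1 p.2) := by
  have h := f.2
  exact h

lemma differentiable_smoothFun (f : smoothFun m Cl) :
    Differentiable ℝ (fun p : (Fin m → ℝ) × (Fin m → ℝ) => f.1 p.1 p.2) :=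
  (contDiff_smoothFun f).differentiable (by simp)

/-- The derivative of a smooth function in the constant direction `v`. -/
noncomputable def dirDeriv (v : (Fin m → ℝ) × (Fin m → ℝ)) :
    Module.End ℝ (smoothFun m Cl) where
  toFun f := ⟨fun x u => fderiv ℝ (fun p : (Fin m → ℝ) × (Fin m → ℝ) => f.1 p.1 p.2) (x, u) v,
    ((contDiff_smoothFun f).fderiv_right (m := (⊤ : ℕ∞)) (by simp)).clm_apply contDiff_const⟩
  map_add' f g := by
    ext x u
    exact congrArg (· v) (fderiv_add (differentiable_smoothFun f (x, u))
      (differentiable_smoothFun g (x, u)))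
  map_smul' r f := by
    ext x u
    exact congrArg (· v) (fderiv_const_smul (differentiable_smoothFun f (x, u)) r)

/-- Multiplication by the coordinate `u j`. -/
def coordMul (j : Fin m) : Module.End ℝ (smoothFun m Cl) where
  toFun f := ⟨fun x u => u j • f.1 x u,
    ((contDiff_apply ℝ ℝ j).comp contDiff_snd).smul (contDiff_smoothFun f)⟩
  map_add' f g := by ext x u; exact smul_add _ _ _
  map_smul' r f := by ext x u; exact smul_comm _ _ _

/-- Left multiplication by a constant. -/
def leftMul (a : Cl) : Module.End ℝ (smoothFun m Cl) where
  toFun f := ⟨fun x u => a * f.1 x u, contDiff_const.mul (contDiff_smoothFun f)⟩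
  map_add' f g := by ext x u; exact mul_add _ _ _
  map_smul' r f := by ext x u; exact mul_smul_comm _ _ _

lemma dirDeriv_comm (v w : (Fin m → ℝ) × (Fin m → ℝ)) :
    Commute (dirDeriv v : Module.End ℝ (smoothFun m Cl)) (dirDeriv w) := by
  refine LinearMap.ext fun f => ?_
  ext x u
  have hd : DifferentiableAt ℝ
      (fderiv ℝ (fun p : (Fin m → ℝ) × (Fin m → ℝ) => f.1 p.1 p.2)) (x, u) :=
    ((contDiff_smoothFun f).fderiv_right (m := (⊤ : ℕ∞)) (by simp)).differentiable (by simp) _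
  have hs : IsSymmSndFDerivAt ℝ
      (fun p : (Fin m → ℝ) × (Fin m → ℝ) => f.1 p.1 p.2) (x, u) :=
    ((contDiff_smoothFun f).contDiffAt).isSymmSndFDerivAt (by
      simpa using WithTop.coe_le_coe.2 (le_top : (2 : ℕ∞) ≤ ⊤))
  have h : ∀ v w, fderiv ℝ (fun q => fderiv ℝ
      (fun p : (Fin m → ℝ) × (Fin m → ℝ) => f.1 p.1 p.2) q v) (x, u) w
      = fderiv ℝ (fderiv ℝ (fun p : (Fin m → ℝ) × (Fin m → ℝ) => f.1 p.1 p.2)) (x, u) w v := by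
    intro v w
    rw [fderiv_clm_apply hd (differentiableAt_const v)]
    simp
  exact (h w v).trans ((hs.eq v w).trans (h v w).symm)

lemma dirDeriv_mul_coordMul (v : (Fin m → ℝ) × (Fin m → ℝ)) (j : Fin m) :
    (dirDeriv v : Module.End ℝ (smoothFun m Cl)) * coordMul j
      = coordMul j * dirDeriv v + algebraMap ℝ _ (v.2 j) := by
  refine LinearMap.ext fun f => ?_
  ext x u
  have hc : HasFDerivAt (fun p : (Fin m → ℝ) × (Fin m → ℝ) => p.2 j)
      ((ContinuousLinearMap.proj j).comp (ContinuousLinearMap.snd ℝ (Fin m → ℝ) (Fin m → ℝ)))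
      (x, u) :=
    ((ContinuousLinearMap.proj (R := ℝ) j).comp
      (ContinuousLinearMap.snd ℝ (Fin m → ℝ) (Fin m → ℝ))).hasFDerivAt
  have h := (hc.smul (differentiable_smoothFun f (x, u)).hasFDerivAt).fderiv
  refine (congrArg (· v) h).trans ?_
  simp [Algebra.algebraMap_eq_smul_one]
  rfl

lemma leftMul_comm_dirDeriv (a : Cl) (v : (Fin m → ℝ) × (Fin m → ℝ)) :
    Commute (leftMul a : Module.End ℝ (smoothFun m Cl)) (dirDeriv v) := by
  refine LinearMap.ext fun f => ?_
  ext x u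
  exact (congrArg (· v) (fderiv_const_mul (differentiable_smoothFun f (x, u)) a)).symm

lemma leftMul_comm_coordMul (a : Cl) (j : Fin m) :
    Commute (leftMul a : Module.End ℝ (smoothFun m Cl)) (coordMul j) := by
  refine LinearMap.ext fun f => ?_
  ext x u
  exact mul_smul_comm _ _ _

lemma coordMul_comm (i j : Fin m) :
    Commute (coordMul i : Module.End ℝ (smoothFun m Cl)) (coordMul j) := by
  refine LinearMap.ext fun f => ?_
  ext x u
  exact smul_comm _ _ _

lemma cliffordRel_leftMul {e : Fin m → Cl} (he : CliffordRel e) :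
    CliffordRel (fun i => (leftMul (e i) : Module.End ℝ (smoothFun m Cl))) := by
  intro i j
  refine LinearMap.ext fun f => ?_
  ext x u
  change e i * (e j * f.1 x u) + e j * (e i * f.1 x u) = _
  rw [← mul_assoc, ← mul_assoc, ← add_mul, he i j, ← Algebra.smul_def]
  rfl

/-- `∂/∂x_j` on smooth functions. -/
noncomputable def derivX (j : Fin m) : Module.End ℝ (smoothFun m Cl) :=
  dirDeriv (Pi.single j 1, 0)

/-- `∂/∂u_j` on smooth functions. -/
noncomputable def derivU (j : Fin m) : Module.End ℝ (smoothFun m Cl) :=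
  dirDeriv (0, Pi.single j 1)

lemma coe_derivX (j : Fin m) (f : smoothFun m Cl) : (derivX j f).1 = pdx j f.1 := by
  ext x u
  have h := ((differentiable_smoothFun f (x, u)).hasFDerivAt.comp x
    (hasFDerivAt_prodMk_left (𝕜 := ℝ) x u)).fderiv
  exact (congrArg (· (Pi.single j 1)) h).symm

lemma coe_derivU (j : Fin m) (f : smoothFun m Cl) : (derivU j f).1 = pdu j f.1 := by
  ext x u
  have h := ((differentiable_smoothFun f (x, u)).hasFDerivAt.comp u
    (hasFDerivAt_prodMk_right (𝕜 := ℝ) x u)).fderiv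
  exact (congrArg (· (Pi.single j 1)) h).symm

lemma coe_sum_apply (g : Fin m → smoothFun m Cl) (x u : Fin m → ℝ) :
    (∑ j, g j).1 x u = ∑ j, (g j).1 x u := by
  rw [← Submodule.subtype_apply, map_sum, Finset.sum_apply, Finset.sum_apply]
  rfl

/-- Left multiplication by the Clifford vector `u`. -/
noncomputable def vecMulOp (e : Fin m → Cl) : Module.End ℝ (smoothFun m Cl) :=
  ∑ j, leftMul (e j) * coordMul j

/-- The Dirac operator in `x` on smooth functions. -/
noncomputable def diracXOp (e : Fin m → Cl) : Module.End ℝ (smoothFun m Cl) :=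
  ∑ j, leftMul (e j) * derivX j

/-- The Dirac operator in `u` on smooth functions. -/
noncomputable def diracUOp (e : Fin m → Cl) : Module.End ℝ (smoothFun m Cl) :=
  ∑ j, leftMul (e j) * derivU j

/-- The Euler operator in `u`. -/
noncomputable def eulerOp : Module.End ℝ (smoothFun m Cl) :=
  ∑ j, coordMul j * derivU j

/-- The operator `⟨u, ∇_x⟩`. -/
noncomputable def mixMulOp : Module.End ℝ (smoothFun m Cl) :=
  ∑ j, coordMul j * derivX j

/-- The operator `⟨∇_u, ∇_x⟩`. -/
noncomputable def mixDerOp : Module.End ℝ (smoothFun m Cl) :=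
  ∑ j, derivU j * derivX j

lemma coe_vecMulOp (e : Fin m → Cl) (f : smoothFun m Cl) (x u : Fin m → ℝ) :
    (vecMulOp e f).1 x u = emb e u * f.1 x u := by
  simp only [vecMulOp, LinearMap.sum_apply, coe_sum_apply, emb, Finset.sum_mul]
  refine Finset.sum_congr rfl fun j _ => ?_
  rw [smul_mul_assoc]
  exact mul_smul_comm _ _ _

lemma coe_diracXOp (e : Fin m → Cl) (f : smoothFun m Cl) :
    (diracXOp e f).1 = diracx e f.1 := by
  ext x u
  simp only [diracXOp, LinearMap.sum_apply, coe_sum_apply, diracx, ← coe_derivX]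
  rfl

lemma coe_diracUOp (e : Fin m → Cl) (f : smoothFun m Cl) :
    (diracUOp e f).1 = diracu e f.1 := by
  ext x u
  simp only [diracUOp, LinearMap.sum_apply, coe_sum_apply, diracu, ← coe_derivU]
  rfl

lemma coe_mixDerOp (f : smoothFun m Cl) : (mixDerOp f).1 = mixDer f.1 := by
  ext x u
  simp only [mixDerOp, LinearMap.sum_apply, coe_sum_apply, mixDer, ← coe_derivU, ← coe_derivX]
  rfl

lemma coe_mixMulOp (f : smoothFun m Cl) (x u : Fin m → ℝ) :
    (mixMulOp f).1 x u = ∑ s, u s • pdx s f.1 x u := by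
  simp only [mixMulOp, LinearMap.sum_apply, coe_sum_apply, ← coe_derivX]
  rfl

lemma coe_eulerOp (f : smoothFun m Cl) (x u : Fin m → ℝ) :
    (eulerOp f).1 x u = ∑ s, u s • pd s (f.1 x) u := by
  simp only [eulerOp, LinearMap.sum_apply, coe_sum_apply]
  refine Finset.sum_congr rfl fun j _ => ?_
  change u j • (derivU j f).1 x u = _
  rw [coe_derivU]
  rfl

lemma leftMul_comm_derivX (a : Cl) (j : Fin m) :
    Commute (leftMul a : Module.End ℝ (smoothFun m Cl)) (derivX j) :=
  leftMul_comm_dirDeriv _ _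

lemma leftMul_comm_derivU (a : Cl) (j : Fin m) :
    Commute (leftMul a : Module.End ℝ (smoothFun m Cl)) (derivU j) :=
  leftMul_comm_dirDeriv _ _

lemma derivX_comm_coordMul (i j : Fin m) :
    Commute (derivX i : Module.End ℝ (smoothFun m Cl)) (coordMul j) := by
  have h := dirDeriv_mul_coordMul (Cl := Cl) ((Pi.single i 1, 0) : (Fin m → ℝ) × (Fin m → ℝ)) j
  simp only [Pi.zero_apply, map_zero, add_zero] at h
  exact h

lemma derivU_mul_coordMul (i j : Fin m) :
    (derivU i : Module.End ℝ (smoothFun m Cl)) * coordMul j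
      = coordMul j * derivU i + algebraMap ℝ _ (if i = j then 1 else 0) := by
  have h := dirDeriv_mul_coordMul (Cl := Cl) ((0, Pi.single i 1) : (Fin m → ℝ) × (Fin m → ℝ)) j
  simp only [Pi.single_apply, eq_comm (a := j)] at h
  exact h

lemma coordMul_mul_derivU (i j : Fin m) :
    (coordMul i : Module.End ℝ (smoothFun m Cl)) * derivU j
      = derivU j * coordMul i + algebraMap ℝ _ (if i = j then -1 else 0) := by
  rw [derivU_mul_coordMul, add_assoc, ← map_add]
  by_cases h : i = j
  · simp [h]
  · simp [h, Ne.symm h]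

end SmoothFunctions

/-- Commuting elements in the form with a vanishing central term. -/
lemma Commute.mul_eq_add_algebraMap_ite {A : Type*} [Ring A] [Algebra ℝ A] {a b : A}
    (h : Commute a b) (p : Prop) [Decidable p] :
    a * b = b * a + algebraMap ℝ A (if p then 0 else 0) := by
  simpa using h.eq

/-! ### Homogeneous polynomials -/

lemma IsHomPoly.differentiable_and_euler {m k : ℕ} {E : Type*} [NormedAddCommGroup E]
    [NormedSpace ℝ E] {f : (Fin m → ℝ) → E} (hf : IsHomPoly k f) :
    Differentiable ℝ f ∧ ∀ u, ∑ s, u s • pd s f u = (k : ℝ) • f u := by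
  have hpd : ∀ (g : (Fin m → ℝ) → E) u, ∑ s, u s • pd s g u = fderiv ℝ g u u := by
    intro g u
    simp only [pd, ← map_smul]
    rw [← map_sum]
    congr 1
    ext i
    simp [Finset.sum_apply, Pi.single_apply]
  simp only [hpd]
  refine Submodule.span_induction ?_ ?_ ?_ ?_ hf
  · rintro _ ⟨α, c, hα, rfl⟩
    have hdiff : Differentiable ℝ fun x : Fin m → ℝ => (∏ i, x i ^ α i) • c := by fun_prop
    refine ⟨hdiff, fun u => ?_⟩
    have hline : HasDerivAt (fun t : ℝ => t • u) u 1 := by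
      simpa using (hasDerivAt_id (1 : ℝ)).smul_const u
    have h1 : HasDerivAt (fun t : ℝ => (∏ i, (t • u) i ^ α i) • c)
        (fderiv ℝ (fun x : Fin m → ℝ => (∏ i, x i ^ α i) • c) u u) 1 := by
      have h := hdiff u
      rw [← one_smul ℝ u] at h
      have h' := h.hasFDerivAt.comp_hasDerivAt (1 : ℝ) hline
      rwa [one_smul] at h'
    have hpow : (fun t : ℝ => (∏ i, (t • u) i ^ α i) • c)
        = fun t : ℝ => t ^ k • ((∏ i, u i ^ α i) • c) := by
      ext t
      simp only [Pi.smul_apply, smul_eq_mul, mul_pow, Finset.prod_mul_distrib,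
        Finset.prod_pow_eq_pow_sum, hα, mul_smul]
    rw [hpow] at h1
    have h2 := (hasDerivAt_pow k (1 : ℝ)).smul_const ((∏ i, u i ^ α i) • c)
    simpa using h1.unique h2
  · exact ⟨differentiable_const 0, fun u => by simp⟩
  · rintro f g - - ⟨hf, hf'⟩ ⟨hg, hg'⟩
    refine ⟨hf.add hg, fun u => ?_⟩
    rw [fderiv_add (hf u) (hg u)]
    simp [hf', hg']
  · rintro r f - ⟨hf, hf'⟩
    refine ⟨hf.const_smul r, fun u => ?_⟩
    rw [fderiv_const_smul (hf u) r]
    simp [hf', smul_comm r]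

/-! ### Second-order relations on smooth functions -/

section Relations

variable {m : ℕ} {Cl : Type*} [NormedRing Cl] [NormedAlgebra ℝ Cl] {e : Fin m → Cl}

/-- A linear map whose anticommutator with itself is `-2 • L` squares to `-L`. -/
lemma apply_apply_eq_neg {V : Type*} [AddCommGroup V] [Module ℝ V] {T L : Module.End ℝ V} {r : ℝ}
    (h : T * T + T * T = (-2 : ℝ) • L - algebraMap ℝ _ (r * 0)) (w : V) : T (T w) = -L w := by
  have h' : T (T w) + T (T w) = (-2 : ℝ) • L w - (r * 0) • w := LinearMap.congr_fun h w
  linear_combination (norm := module) (1 / 2 : ℝ) • h'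

lemma diracXOp_diracXOp (he : CliffordRel e) (w : smoothFun m Cl) :
    diracXOp e (diracXOp e w) = -(∑ j, derivX j * derivX j : Module.End ℝ (smoothFun m Cl)) w := by
  have h := anticomm_sum (κ := 0)
    (a := fun i => (leftMul (e i) : Module.End ℝ (smoothFun m Cl)))
    (b := derivX) (c := derivX) (cliffordRel_leftMul he)
    (fun i j => leftMul_comm_derivX (e i) j) (fun i j => leftMul_comm_derivX (e i) j)
    (fun i j => (dirDeriv_comm _ _).mul_eq_add_algebraMap_ite (i = j))
  exact apply_apply_eq_neg h w

lemma diracUOp_diracUOp (he : CliffordRel e) (w : smoothFun m Cl) :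
    diracUOp e (diracUOp e w) = -(∑ j, derivU j * derivU j : Module.End ℝ (smoothFun m Cl)) w := by
  have h := anticomm_sum (κ := 0)
    (a := fun i => (leftMul (e i) : Module.End ℝ (smoothFun m Cl)))
    (b := derivU) (c := derivU) (cliffordRel_leftMul he)
    (fun i j => leftMul_comm_derivU (e i) j) (fun i j => leftMul_comm_derivU (e i) j)
    (fun i j => (dirDeriv_comm _ _).mul_eq_add_algebraMap_ite (i = j))
  exact apply_apply_eq_neg h w

lemma vecMulOp_vecMulOp (he : CliffordRel e) (w : smoothFun m Cl) :
    vecMulOp e (vecMulOp e w)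
      = -(∑ j, coordMul j * coordMul j : Module.End ℝ (smoothFun m Cl)) w := by
  have h := anticomm_sum (κ := 0)
    (a := fun i => (leftMul (e i) : Module.End ℝ (smoothFun m Cl)))
    (b := coordMul) (c := coordMul) (cliffordRel_leftMul he)
    (fun i j => leftMul_comm_coordMul (e i) j) (fun i j => leftMul_comm_coordMul (e i) j)
    (fun i j => (coordMul_comm _ _).mul_eq_add_algebraMap_ite (i = j))
  exact apply_apply_eq_neg h w

lemma diracUOp_vecMulOp (he : CliffordRel e) (w : smoothFun m Cl) :
    diracUOp e (vecMulOp e w)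
      = -vecMulOp e (diracUOp e w) - (2 : ℝ) • eulerOp w - (m : ℝ) • w := by
  have h := anticomm_sum (κ := 1)
    (a := fun i => (leftMul (e i) : Module.End ℝ (smoothFun m Cl)))
    (b := derivU) (c := coordMul) (cliffordRel_leftMul he)
    (fun i j => leftMul_comm_derivU (e i) j) (fun i j => leftMul_comm_coordMul (e i) j)
    (fun i j => derivU_mul_coordMul i j)
  have h' : diracUOp e (vecMulOp e w) + vecMulOp e (diracUOp e w)
      = (-2 : ℝ) • eulerOp w - ((m : ℝ) * 1) • w := LinearMap.congr_fun h w
  linear_combination (norm := module) h'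

lemma diracXOp_vecMulOp (he : CliffordRel e) (w : smoothFun m Cl) :
    diracXOp e (vecMulOp e w) = -vecMulOp e (diracXOp e w) - (2 : ℝ) • mixMulOp w := by
  have h := anticomm_sum (κ := 0)
    (a := fun i => (leftMul (e i) : Module.End ℝ (smoothFun m Cl)))
    (b := derivX) (c := coordMul) (cliffordRel_leftMul he)
    (fun i j => leftMul_comm_derivX (e i) j) (fun i j => leftMul_comm_coordMul (e i) j)
    (fun i j => (derivX_comm_coordMul i j).mul_eq_add_algebraMap_ite (i = j))
  have h' : diracXOp e (vecMulOp e w) + vecMulOp e (diracXOp e w)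
      = (-2 : ℝ) • mixMulOp w - ((m : ℝ) * 0) • w := LinearMap.congr_fun h w
  linear_combination (norm := module) h'

lemma diracUOp_diracXOp (he : CliffordRel e) (w : smoothFun m Cl) :
    diracUOp e (diracXOp e w) = -diracXOp e (diracUOp e w) - (2 : ℝ) • mixDerOp w := by
  have h := anticomm_sum (κ := 0)
    (a := fun i => (leftMul (e i) : Module.End ℝ (smoothFun m Cl)))
    (b := derivX) (c := derivU) (cliffordRel_leftMul he)
    (fun i j => leftMul_comm_derivX (e i) j) (fun i j => leftMul_comm_derivU (e i) j)
    (fun i j => (dirDeriv_comm _ _).mul_eq_add_algebraMap_ite (i = j))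
  have h' : diracXOp e (diracUOp e w) + diracUOp e (diracXOp e w)
      = (-2 : ℝ) • mixDerOp w - ((m : ℝ) * 0) • w := LinearMap.congr_fun h w
  linear_combination (norm := module) h'

lemma diracUOp_mixMulOp (w : smoothFun m Cl) :
    diracUOp e (mixMulOp w) = mixMulOp (diracUOp e w) + diracXOp e w := by
  have h := comm_sum (κ := 1)
    (a := fun i => (leftMul (e i) : Module.End ℝ (smoothFun m Cl)))
    (b := derivU) (c := coordMul) (g := derivX)
    (fun i j => leftMul_comm_coordMul (e i) j)
    (fun i j => leftMul_comm_derivX (e i) j) (fun i j => dirDeriv_comm _ _)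
    (fun i j => derivU_mul_coordMul i j)
  rw [one_smul] at h
  exact LinearMap.congr_fun h w

lemma diracXOp_mixMulOp (w : smoothFun m Cl) :
    diracXOp e (mixMulOp w) = mixMulOp (diracXOp e w) := by
  have h := comm_sum (κ := 0)
    (a := fun i => (leftMul (e i) : Module.End ℝ (smoothFun m Cl)))
    (b := derivX) (c := coordMul) (g := derivX)
    (fun i j => leftMul_comm_coordMul (e i) j)
    (fun i j => leftMul_comm_derivX (e i) j) (fun i j => dirDeriv_comm _ _)
    (fun i j => (derivX_comm_coordMul i j).mul_eq_add_algebraMap_ite (i = j))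
  rw [zero_smul, add_zero] at h
  exact LinearMap.congr_fun h w

lemma mixMulOp_vecMulOp (w : smoothFun m Cl) :
    mixMulOp (vecMulOp e w) = vecMulOp e (mixMulOp w) := by
  have h := comm_sum (κ := 0)
    (a := fun i => (leftMul (e i) : Module.End ℝ (smoothFun m Cl)))
    (b := coordMul) (c := coordMul) (g := derivX)
    (fun i j => leftMul_comm_coordMul (e i) j)
    (fun i j => leftMul_comm_derivX (e i) j) (fun i j => (derivX_comm_coordMul j i).symm)
    (fun i j => (coordMul_comm i j).mul_eq_add_algebraMap_ite (i = j))
  rw [zero_smul, add_zero] at h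
  exact (LinearMap.congr_fun h w).symm

lemma diracUOp_mixDerOp (w : smoothFun m Cl) :
    diracUOp e (mixDerOp w) = mixDerOp (diracUOp e w) := by
  have h := comm_sum (κ := 0)
    (a := fun i => (leftMul (e i) : Module.End ℝ (smoothFun m Cl)))
    (b := derivU) (c := derivU) (g := derivX)
    (fun i j => leftMul_comm_derivU (e i) j)
    (fun i j => leftMul_comm_derivX (e i) j) (fun i j => dirDeriv_comm _ _)
    (fun i j => (dirDeriv_comm _ _).mul_eq_add_algebraMap_ite (i = j))
  rw [zero_smul, add_zero] at h
  exact LinearMap.congr_fun h w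

lemma mixDerOp_diracXOp (w : smoothFun m Cl) :
    mixDerOp (diracXOp e w) = diracXOp e (mixDerOp w) := by
  have h := comm_sum (κ := 0)
    (a := fun i => (leftMul (e i) : Module.End ℝ (smoothFun m Cl)))
    (b := derivX) (c := derivU) (g := derivX)
    (fun i j => leftMul_comm_derivU (e i) j)
    (fun i j => leftMul_comm_derivX (e i) j) (fun i j => dirDeriv_comm _ _)
    (fun i j => (dirDeriv_comm _ _).mul_eq_add_algebraMap_ite (i = j))
  rw [zero_smul, add_zero] at h
  exact (LinearMap.congr_fun h w).symm

lemma eulerOp_diracXOp (w : smoothFun m Cl) :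
    eulerOp (diracXOp e w) = diracXOp e (eulerOp w) := by
  have h := comm_sum (κ := 0)
    (a := fun i => (leftMul (e i) : Module.End ℝ (smoothFun m Cl)))
    (b := derivX) (c := coordMul) (g := derivU)
    (fun i j => leftMul_comm_coordMul (e i) j)
    (fun i j => leftMul_comm_derivU (e i) j) (fun i j => dirDeriv_comm _ _)
    (fun i j => (derivX_comm_coordMul i j).mul_eq_add_algebraMap_ite (i = j))
  rw [zero_smul, add_zero] at h
  exact (LinearMap.congr_fun h w).symm

lemma eulerOp_diracUOp (w : smoothFun m Cl) :
    eulerOp (diracUOp e w) = diracUOp e (eulerOp w) - diracUOp e w := by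
  have h := comm_sum (κ := 1)
    (a := fun i => (leftMul (e i) : Module.End ℝ (smoothFun m Cl)))
    (b := derivU) (c := coordMul) (g := derivU)
    (fun i j => leftMul_comm_coordMul (e i) j)
    (fun i j => leftMul_comm_derivU (e i) j) (fun i j => dirDeriv_comm _ _)
    (fun i j => derivU_mul_coordMul i j)
  rw [one_smul] at h
  exact eq_sub_of_add_eq (LinearMap.congr_fun h w).symm

lemma eulerOp_vecMulOp (w : smoothFun m Cl) :
    eulerOp (vecMulOp e w) = vecMulOp e (eulerOp w) + vecMulOp e w := by
  have h := comm_sum (κ := -1)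
    (a := fun i => (leftMul (e i) : Module.End ℝ (smoothFun m Cl)))
    (b := coordMul) (c := derivU) (g := coordMul)
    (fun i j => leftMul_comm_derivU (e i) j)
    (fun i j => leftMul_comm_coordMul (e i) j) (fun i j => coordMul_comm i j)
    (fun i j => coordMul_mul_derivU i j)
  have hE : (∑ j, derivU j * coordMul j : Module.End ℝ (smoothFun m Cl))
      = eulerOp + (m : ℝ) • 1 := by
    simp [derivU_mul_coordMul, Finset.sum_add_distrib, eulerOp, Algebra.smul_def]
  rw [hE] at h
  have h' : vecMulOp e (eulerOp w + (m : ℝ) • w)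
      = eulerOp (vecMulOp e w) + (m : ℝ) • vecMulOp e w + (-1 : ℝ) • vecMulOp e w :=
    LinearMap.congr_fun h w
  rw [map_add, map_smul] at h'
  linear_combination (norm := module) -h'

lemma coe_PpU (k : ℕ) (w : smoothFun m Cl) :
    PpU e k w.1 = (w + ((m : ℝ) + 2 * k - 2)⁻¹ • vecMulOp e (diracUOp e w)).1 := by
  ext x u
  rw [PpU, ← coe_diracUOp, ← coe_vecMulOp]
  rfl

lemma coe_PmU (k : ℕ) (w : smoothFun m Cl) :
    PmU e k w.1 = (-(((m : ℝ) + 2 * k - 2)⁻¹ • vecMulOp e (diracUOp e w))).1 := by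
  ext x u
  rw [PmU, ← coe_diracUOp, ← coe_vecMulOp]
  rfl

lemma coe_bosonic (he : CliffordRel e) (k : ℕ) (w : smoothFun m Cl) :
    bosonic k w.1 = (-diracXOp e (diracXOp e w)
      - (4 / ((m : ℝ) + 2 * k - 2)) • mixMulOp (mixDerOp w)
      - (4 / (((m : ℝ) + 2 * k - 2) * ((m : ℝ) + 2 * k - 2 - 2))) •
          vecMulOp e (vecMulOp e (mixDerOp (mixDerOp w)))).1 := by
  ext x u
  have hlap : ((∑ j, derivX j * derivX j : Module.End ℝ (smoothFun m Cl)) w).1 x u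
      = lapx w.1 x u := by
    simp only [LinearMap.sum_apply, coe_sum_apply, lapx, ← coe_derivX]
    rfl
  have hnorm : ∀ v : smoothFun m Cl,
      ((∑ j, coordMul j * coordMul j : Module.End ℝ (smoothFun m Cl)) v).1 x u
        = (∑ i, u i ^ 2) • v.1 x u := by
    intro v
    simp only [LinearMap.sum_apply, coe_sum_apply, Finset.sum_smul, pow_two, mul_smul]
    rfl
  rw [diracXOp_diracXOp he, vecMulOp_vecMulOp he, neg_neg, smul_neg, sub_neg_eq_add, bosonic,
    ← hlap, ← coe_mixDerOp, ← coe_mixDerOp, ← hnorm, ← coe_mixMulOp,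
    show (m : ℝ) + 2 * k - 2 - 2 = m + 2 * k - 4 by ring]
  rfl

end Relations

/-- **Theorem 1, second identity.** For `m ≥ 3`, `k ≥ 1` and smooth
`f : ℝ^m × ℝ^m → Cl_m` with `f(x,·) ∈ H_k` for each `x`,
`D_k f = −R_k² P_k^+ f + (2/(m+2k−4)) R_k T_k P_k^- f − (2/(m+2k−4)) Q_k T_k^* P_k^+ f
− ((m+2k)/(m+2k−4)) Q_k² P_k^- f`, where `P_k^±` act in `u` and `D_x` acts in `x`. -/
theorem stmt10 {m k : ℕ} (hm : 3 ≤ m) (hk : 1 ≤ k) {Cl : Type*} [NormedRing Cl]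
    [NormedAlgebra ℝ Cl] (e : Fin m → Cl) (hrel : CliffordRel e)
    (f : (Fin m → ℝ) → (Fin m → ℝ) → Cl)
    (hf : ContDiff ℝ (⊤ : ℕ∞) (fun p : (Fin m → ℝ) × (Fin m → ℝ) => f p.1 p.2))
    (hfu : ∀ x, IsHomPoly k (f x) ∧ lap (f x) = 0) :
    ∀ x u, bosonic k f x u =
        -(PpDx e k (PpDx e k (PpU e k f)) x u)
          + (2 / ((m : ℝ) + 2 * k - 4)) • PpDx e k (PpDx e k (PmU e k f)) x u
          - (2 / ((m : ℝ) + 2 * k - 4)) • PmDx e k (PmDx e k (PpU e k f)) x u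
          - (((m : ℝ) + 2 * k) / ((m : ℝ) + 2 * k - 4)) •
              PmDx e k (PmDx e k (PmU e k f)) x u := by
  intro x u
  have hm' : (3 : ℝ) ≤ m := by exact_mod_cast hm
  have hk' : (1 : ℝ) ≤ k := by exact_mod_cast hk
  lift f to smoothFun m Cl using hf
  have hEf : eulerOp f = (k : ℝ) • f := by
    ext y v
    rw [coe_eulerOp]
    exact (hfu y).1.differentiable_and_euler.2 v
  have hdf : diracUOp e (diracUOp e f) = 0 := by
    rw [diracUOp_diracUOp hrel, neg_eq_zero]
    ext y v
    refine Eq.trans ?_ (congrFun (hfu y).2 v)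
    simp only [LinearMap.sum_apply, coe_sum_apply, lap]
    refine Finset.sum_congr rfl fun j _ => ?_
    change (derivU j (derivU j f)).1 y v = _
    rw [coe_derivU, coe_derivU]
    rfl
  have key := bosonic_decomposition_of_relations (u := vecMulOp e) (D := diracXOp e)
    (d := diracUOp e) (E := eulerOp) (S := mixMulOp) (M := mixDerOp) (m := m) (k := k)
    (c := (m : ℝ) + 2 * k - 2) rfl (by linarith) (by linarith)
    (diracUOp_vecMulOp hrel) (diracXOp_vecMulOp hrel) (diracUOp_diracXOp hrel)
    diracUOp_mixMulOp diracXOp_mixMulOp mixMulOp_vecMulOp diracUOp_mixDerOp mixDerOp_diracXOp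
    eulerOp_diracXOp eulerOp_diracUOp eulerOp_vecMulOp
    (fun _ => rfl) (fun _ => rfl) hEf hdf
  simp only [PpDx, PmDx, coe_PpU, coe_PmU, ← coe_diracXOp, coe_bosonic hrel]
  rw [key, show (m : ℝ) + 2 * k - 4 = m + 2 * k - 2 - 2 by ring,
    show (m : ℝ) + 2 * k = m + 2 * k - 2 + 2 by ring]
  simp
end

section
/- Let m ≥ 3 and k ≥ 1, and let f: ℝ^m × ℝ^m → Cl_m be smooth with f(x,·) ∈ H_k for each fixed x. Then the compositions P_k^+ ∘ T_k^* ∘ P_k^+, P_k^+ ∘ Q_k ∘ P_k^−, P_k^− ∘ R_k ∘ P_k^+, and P_k^− ∘ T_k ∘ P_k^− all annihilate f; equivalently, for each fixed x, (R_k P_k^+ f)(x,·) and (T_k P_k^− f)(x,·) belong to M_k, while (T_k^* P_k^+ f)(x,·) and (Q_k P_k^− f)(x,·) belong to uM_{k−1}. -/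
open scoped BigOperators

theorem minSmoothness_le_top : minSmoothness ℝ 2 ≤ ((⊤ : ℕ∞) : WithTop ℕ∞) := by
  rw [minSmoothness_of_isRCLikeNormedField]
  exact WithTop.coe_le_coe.2 le_top

section OneVariable

variable {m : ℕ} {E : Type*} [NormedAddCommGroup E] [NormedSpace ℝ E]

theorem IsHomPoly.map_smul {k : ℕ} {g : (Fin m → ℝ) → E} (h : IsHomPoly k g)
    (t : ℝ) (u : Fin m → ℝ) : g (t • u) = t ^ k • g u := by
  induction h using Submodule.span_induction with
  | mem g hg =>
    obtain ⟨α, c, rfl, rfl⟩ := hg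
    simp [mul_pow, Finset.prod_mul_distrib, Finset.prod_pow_eq_pow_sum, mul_smul]
  | zero => simp
  | add g h _ _ hg hh => simp [hg, hh]
  | smul a g _ hg => simp [hg, smul_comm a]

theorem IsHomPoly.coord_smul {k : ℕ} {g : (Fin m → ℝ) → E} (h : IsHomPoly k g) (j : Fin m) :
    IsHomPoly (k + 1) (fun u => u j • g u) := by
  induction h using Submodule.span_induction with
  | mem g hg =>
    obtain ⟨α, c, rfl, rfl⟩ := hg
    refine Submodule.subset_span ⟨α + Pi.single j 1, c, ?_, ?_⟩
    · simp [Finset.sum_add_distrib]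
    · ext u
      simp only [Pi.add_apply, pow_add, Finset.prod_mul_distrib, smul_smul]
      rw [mul_comm]
      congr 2
      rw [Finset.prod_eq_single j]
      · simp
      · intro b _ hb
        simp [hb]
      · simp
  | zero =>
    simp only [Pi.zero_apply, smul_zero]
    exact Submodule.zero_mem _
  | add g h _ _ hg hh =>
    simp only [Pi.add_apply, smul_add]
    exact Submodule.add_mem _ hg hh
  | smul a g _ hg =>
    simp only [Pi.smul_apply, smul_comm _ a]
    exact Submodule.smul_mem _ a hg

theorem contDiff_pd {g : (Fin m → ℝ) → E} (hg : ContDiff ℝ (⊤ : ℕ∞) g) (j : Fin m) :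
    ContDiff ℝ (⊤ : ℕ∞) (pd j g) :=
  (hg.fderiv_right (m := (⊤ : ℕ∞)) (by simp)).clm_apply contDiff_const

theorem fderiv_apply_eq_sum_pd (g : (Fin m → ℝ) → E) (u v : Fin m → ℝ) :
    fderiv ℝ g u v = ∑ j, v j • pd j g u := by
  conv_lhs => rw [pi_eq_sum_univ' v]
  simp only [map_sum, map_smul, pd]

/-- Euler's identity for homogeneous functions. -/
theorem sum_smul_pd_of_homogeneous {k : ℕ} {g : (Fin m → ℝ) → E}
    (hg : ContDiff ℝ (⊤ : ℕ∞) g) (hom : ∀ (t : ℝ) u, g (t • u) = t ^ k • g u)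
    (u : Fin m → ℝ) : ∑ j, u j • pd j g u = (k : ℝ) • g u := by
  rw [← fderiv_apply_eq_sum_pd]
  have h1 : HasDerivAt (fun t : ℝ => g (t • u)) (fderiv ℝ g u u) 1 := by
    have hd : HasFDerivAt g (fderiv ℝ g u) ((1 : ℝ) • u) := by
      rw [one_smul]
      exact (hg.differentiable (by simp) u).hasFDerivAt
    have := hd.comp_hasDerivAt (1 : ℝ) ((hasDerivAt_id (1 : ℝ)).smul_const u)
    simpa [Function.comp_def] using this
  have h2 : HasDerivAt (fun t : ℝ => g (t • u)) ((k : ℝ) • g u) 1 := by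
    simp only [hom]
    simpa using (hasDerivAt_pow k (1 : ℝ)).smul_const (g u)
  exact h1.unique h2

theorem pd_homogeneous {k : ℕ} {g : (Fin m → ℝ) → E}
    (hg : ContDiff ℝ (⊤ : ℕ∞) g) (hom : ∀ (t : ℝ) u, g (t • u) = t ^ (k + 1) • g u)
    (j : Fin m) (t : ℝ) (u : Fin m → ℝ) : pd j g (t • u) = t ^ k • pd j g u := by
  have hne : ∀ s : ℝ, s ≠ 0 → pd j g (s • u) = s ^ k • pd j g u := by
    intro s hs
    have h1 : HasFDerivAt (fun v => g (s • v))
        ((fderiv ℝ g (s • u)).comp (s • ContinuousLinearMap.id ℝ (Fin m → ℝ))) u :=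
      (hg.differentiable (by simp) (s • u)).hasFDerivAt.comp u
        ((hasFDerivAt_id u).const_smul s)
    have h2 : HasFDerivAt (fun v => g (s • v)) (s ^ (k + 1) • fderiv ℝ g u) u := by
      simp only [hom]
      exact (hg.differentiable (by simp) u).hasFDerivAt.const_smul (s ^ (k + 1))
    have h3 := congrArg (fun L => L (Pi.single j 1)) (h1.unique h2)
    simp only [ContinuousLinearMap.comp_apply, smul_apply,
      ContinuousLinearMap.id_apply, map_smul, pow_succ', mul_smul] at h3
    exact smul_right_injective E hs h3
  have hc : Continuous (pd j g) := (contDiff_pd hg j).continuous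
  have := Continuous.ext_on (dense_compl_singleton (0 : ℝ))
    (f := fun s => pd j g (s • u)) (g := fun s => s ^ k • pd j g u)
    (by fun_prop) (by fun_prop) (fun s hs => hne s hs)
  exact congrFun this t

/-- A smooth function that is homogeneous of degree `k` is a homogeneous polynomial. -/
theorem isHomPoly_of_homogeneous {k : ℕ} {g : (Fin m → ℝ) → E}
    (hg : ContDiff ℝ (⊤ : ℕ∞) g) (hom : ∀ (t : ℝ) u, g (t • u) = t ^ k • g u) :
    IsHomPoly k g := by
  induction k generalizing g with
  | zero =>
    refine Submodule.subset_span ⟨0, g 0, by simp, ?_⟩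
    ext u
    simpa using (hom 0 u).symm
  | succ k ih =>
    have hsum : g = ((k + 1 : ℕ) : ℝ)⁻¹ • ∑ j, fun u => u j • pd j g u := by
      ext u
      rw [Pi.smul_apply, Finset.sum_apply, sum_smul_pd_of_homogeneous hg hom,
        inv_smul_smul₀ (by positivity)]
    rw [hsum]
    exact Submodule.smul_mem _ _ (Submodule.sum_mem _ fun j _ =>
      (ih (contDiff_pd hg j) (pd_homogeneous hg hom j)).coord_smul j)

theorem pd_comm {g : (Fin m → ℝ) → E} (hg : ContDiff ℝ (⊤ : ℕ∞) g) (i j : Fin m) :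
    pd i (pd j g) = pd j (pd i g) := by
  have h2 : ∀ a b : Fin m, ∀ u, pd a (pd b g) u =
      fderiv ℝ (fderiv ℝ g) u (Pi.single a 1) (Pi.single b 1) := by
    intro a b u
    have hd : DifferentiableAt ℝ (fderiv ℝ g) u :=
      (hg.fderiv_right (m := (⊤ : ℕ∞)) (by simp)).differentiable (by simp) u
    change fderiv ℝ (fun v => fderiv ℝ g v (Pi.single b 1)) u (Pi.single a 1) = _
    rw [fderiv_clm_apply hd (by fun_prop)]
    simp
  ext u
  rw [h2, h2]
  exact (hg.contDiffAt.isSymmSndFDerivAt minSmoothness_le_top) _ _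

end OneVariable

section Clifford

variable {m : ℕ} {Cl : Type*} [NormedRing Cl] [NormedAlgebra ℝ Cl] {e : Fin m → Cl}

theorem pd_sum_const_mul {ι : Type*} [Fintype ι] (a : ι → Cl) {g : ι → (Fin m → ℝ) → Cl}
    (hg : ∀ i, ContDiff ℝ (⊤ : ℕ∞) (g i)) (j : Fin m) :
    pd j (fun u => ∑ i, a i * g i u) = fun u => ∑ i, a i * pd j (g i) u := by
  ext u
  have hd : ∀ i, DifferentiableAt ℝ (g i) u := fun i => (hg i).differentiable (by simp) u
  simp only [pd]
  rw [fderiv_fun_sum fun i _ => (hd i).const_mul (a i)]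
  simp [fderiv_const_mul, hd]

theorem pd_add {g h : (Fin m → ℝ) → Cl} (hg : ContDiff ℝ (⊤ : ℕ∞) g)
    (hh : ContDiff ℝ (⊤ : ℕ∞) h) (j : Fin m) (u : Fin m → ℝ) :
    pd j (fun v => g v + h v) u = pd j g u + pd j h u := by
  simp only [pd]
  rw [fderiv_fun_add (hg.differentiable (by simp) u) (hh.differentiable (by simp) u)]
  rfl

theorem pd_const_smul {g : (Fin m → ℝ) → Cl} (hg : ContDiff ℝ (⊤ : ℕ∞) g) (a : ℝ)
    (j : Fin m) (u : Fin m → ℝ) : pd j (fun v => a • g v) u = a • pd j g u := by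
  simp only [pd]
  rw [fderiv_fun_const_smul (hg.differentiable (by simp) u)]
  rfl

theorem dirac_add {g h : (Fin m → ℝ) → Cl} (hg : ContDiff ℝ (⊤ : ℕ∞) g)
    (hh : ContDiff ℝ (⊤ : ℕ∞) h) (u : Fin m → ℝ) :
    dirac e (fun v => g v + h v) u = dirac e g u + dirac e h u := by
  simp [dirac, pd_add hg hh, mul_add, Finset.sum_add_distrib]

theorem dirac_const_smul {g : (Fin m → ℝ) → Cl} (hg : ContDiff ℝ (⊤ : ℕ∞) g) (a : ℝ)
    (u : Fin m → ℝ) : dirac e (fun v => a • g v) u = a • dirac e g u := by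
  simp [dirac, pd_const_smul hg, Finset.smul_sum]

theorem contDiff_dirac {g : (Fin m → ℝ) → Cl} (hg : ContDiff ℝ (⊤ : ℕ∞) g) :
    ContDiff ℝ (⊤ : ℕ∞) (dirac e g) :=
  ContDiff.sum fun j _ => contDiff_const.mul (contDiff_pd hg j)

theorem contDiff_emb : ContDiff ℝ (⊤ : ℕ∞) (emb e) := by
  unfold emb
  fun_prop

theorem dirac_homogeneous {k : ℕ} {g : (Fin m → ℝ) → Cl}
    (hg : ContDiff ℝ (⊤ : ℕ∞) g) (hom : ∀ (t : ℝ) u, g (t • u) = t ^ (k + 1) • g u)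
    (t : ℝ) (u : Fin m → ℝ) : dirac e g (t • u) = t ^ k • dirac e g u := by
  simp [dirac, pd_homogeneous hg hom, Finset.smul_sum]

theorem emb_smul (t : ℝ) (u : Fin m → ℝ) : emb e (t • u) = t • emb e u := by
  simp [emb, Finset.smul_sum, mul_smul]

theorem CliffordRel.mul_self (hrel : CliffordRel e) (i : Fin m) : e i * e i = -1 := by
  have h := hrel i i
  rw [if_pos rfl, ← two_smul ℝ, map_neg, Algebra.algebraMap_eq_smul_one,
    ← smul_neg] at h
  exact smul_right_injective Cl (two_ne_zero (α := ℝ)) h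

/-- The Dirac operator squares to minus the Laplacian. -/
theorem dirac_dirac (hrel : CliffordRel e) {g : (Fin m → ℝ) → Cl}
    (hg : ContDiff ℝ (⊤ : ℕ∞) g) : dirac e (dirac e g) = -lap g := by
  ext u
  have hD : dirac e (dirac e g) u = ∑ i, ∑ j, e i * e j * pd i (pd j g) u := by
    refine Finset.sum_congr rfl fun i _ => ?_
    change e i * pd i (fun v => ∑ j, e j * pd j g v) u = _
    rw [pd_sum_const_mul e (fun j => contDiff_pd hg j) i, Finset.mul_sum]
    simp only [mul_assoc]
  have hD' : dirac e (dirac e g) u = ∑ i, ∑ j, e j * e i * pd i (pd j g) u := by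
    rw [hD, Finset.sum_comm]
    refine Finset.sum_congr rfl fun i _ => Finset.sum_congr rfl fun j _ => ?_
    rw [pd_comm hg]
  have h2 : (2 : ℝ) • dirac e (dirac e g) u = (2 : ℝ) • (-lap g) u := by
    rw [two_smul]
    nth_rewrite 1 [hD]
    rw [hD', ← Finset.sum_add_distrib]
    simp only [← Finset.sum_add_distrib, ← add_mul, hrel _ _]
    simp [lap, apply_ite, Algebra.algebraMap_eq_smul_one, Finset.smul_sum]
  exact smul_right_injective Cl (two_ne_zero (α := ℝ)) h2

theorem pd_emb_mul {g : (Fin m → ℝ) → Cl} (hg : ContDiff ℝ (⊤ : ℕ∞) g) (j : Fin m)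
    (u : Fin m → ℝ) : pd j (fun v => emb e v * g v) u = e j * g u + emb e u * pd j g u := by
  have hE : HasFDerivAt (emb e)
      (∑ i, (ContinuousLinearMap.proj (R := ℝ) (φ := fun _ : Fin m => ℝ) i).smulRight (e i)) u := by
    unfold emb
    exact HasFDerivAt.fun_sum fun i _ => (hasFDerivAt_apply i u).smul_const (e i)
  simp only [pd]
  have h : HasFDerivAt (fun v => emb e v * g v) _ u :=
    hE.mul' (hg.differentiable (by simp) u).hasFDerivAt
  rw [h.fderiv]
  simp [Pi.single_apply, add_comm]

theorem CliffordRel.mul_emb (hrel : CliffordRel e) (j : Fin m) (u : Fin m → ℝ) :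
    e j * emb e u = -(emb e u * e j) - (2 * u j) • (1 : Cl) := by
  have h : e j * emb e u + emb e u * e j = -(2 * u j) • (1 : Cl) := by
    simp only [emb, Finset.mul_sum, Finset.sum_mul, mul_smul_comm, smul_mul_assoc,
      ← Finset.sum_add_distrib, ← smul_add, hrel _ _]
    simp [Algebra.algebraMap_eq_smul_one, smul_smul, ite_smul, mul_comm]
  rw [eq_sub_iff_add_eq, eq_neg_iff_add_eq_zero, add_right_comm, h, neg_smul, neg_add_cancel]

theorem dirac_emb_mul (hrel : CliffordRel e) {g : (Fin m → ℝ) → Cl}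
    (hg : ContDiff ℝ (⊤ : ℕ∞) g) (u : Fin m → ℝ) :
    dirac e (fun v => emb e v * g v) u =
      -((m : ℝ) • g u) - emb e u * dirac e g u - (2 : ℝ) • ∑ j, u j • pd j g u := by
  have : ∀ j, e j * (e j * g u + emb e u * pd j g u) =
      -g u - emb e u * (e j * pd j g u) - (2 : ℝ) • (u j • pd j g u) := by
    intro j
    rw [mul_add, ← mul_assoc, hrel.mul_self, ← mul_assoc, hrel.mul_emb]
    simp only [sub_mul, neg_mul, one_mul, smul_mul_assoc, mul_smul, mul_assoc]
    abel
  simp only [dirac, pd_emb_mul hg, this, Finset.sum_sub_distrib, Finset.mul_sum, Finset.smul_sum]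
  simp [Nat.cast_smul_eq_nsmul]

/-- On harmonic homogeneous functions, `D (u D g) = -(m + 2k - 2) D g`. -/
theorem dirac_emb_mul_dirac (hrel : CliffordRel e) {k : ℕ} (hk : 1 ≤ k)
    {g : (Fin m → ℝ) → Cl} (hg : ContDiff ℝ (⊤ : ℕ∞) g)
    (hom : ∀ (t : ℝ) u, g (t • u) = t ^ k • g u) (hlap : lap g = 0) (u : Fin m → ℝ) :
    dirac e (fun v => emb e v * dirac e g v) u = -(((m : ℝ) + 2 * k - 2) • dirac e g u) := by
  obtain ⟨n, rfl⟩ := Nat.exists_eq_add_of_le' hk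
  rw [dirac_emb_mul hrel (contDiff_dirac hg), dirac_dirac hrel hg, hlap,
    sum_smul_pd_of_homogeneous (contDiff_dirac hg) (dirac_homogeneous hg hom)]
  simp only [neg_zero, Pi.zero_apply, mul_zero, sub_zero]
  push_cast
  module

theorem lap_eq_zero_of_dirac_dirac (hrel : CliffordRel e) {g : (Fin m → ℝ) → Cl}
    (hg : ContDiff ℝ (⊤ : ℕ∞) g) (h : dirac e (dirac e g) = 0) : lap g = 0 := by
  rwa [dirac_dirac hrel hg, neg_eq_zero] at h

end Clifford

section TwoVariables

variable {m : ℕ} {E : Type*} [NormedAddCommGroup E] [NormedSpace ℝ E]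

theorem pdx_eq_fderiv {F : (Fin m → ℝ) → (Fin m → ℝ) → E}
    (hF : ContDiff ℝ (⊤ : ℕ∞) (fun p : (Fin m → ℝ) × (Fin m → ℝ) => F p.1 p.2))
    (j : Fin m) (x u : Fin m → ℝ) :
    pdx j F x u = fderiv ℝ (fun p : (Fin m → ℝ) × (Fin m → ℝ) => F p.1 p.2) (x, u)
      (Pi.single j 1, 0) := by
  have h := (hF.differentiable (by simp) (x, u)).hasFDerivAt.comp x
    (hasFDerivAt_prodMk_left (𝕜 := ℝ) x u)
  have h' : HasFDerivAt (fun y => F y u) _ x := h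
  simp [pdx, h'.fderiv]

theorem pdu_eq_fderiv {F : (Fin m → ℝ) → (Fin m → ℝ) → E}
    (hF : ContDiff ℝ (⊤ : ℕ∞) (fun p : (Fin m → ℝ) × (Fin m → ℝ) => F p.1 p.2))
    (j : Fin m) (x u : Fin m → ℝ) :
    pdu j F x u = fderiv ℝ (fun p : (Fin m → ℝ) × (Fin m → ℝ) => F p.1 p.2) (x, u)
      (0, Pi.single j 1) := by
  have h := (hF.differentiable (by simp) (x, u)).hasFDerivAt.comp u
    (hasFDerivAt_prodMk_right (𝕜 := ℝ) x u)
  have h' : HasFDerivAt (fun v => F x v) _ u := h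
  simp [pdu, h'.fderiv]

theorem contDiff_pdx {F : (Fin m → ℝ) → (Fin m → ℝ) → E}
    (hF : ContDiff ℝ (⊤ : ℕ∞) (fun p : (Fin m → ℝ) × (Fin m → ℝ) => F p.1 p.2)) (j : Fin m) :
    ContDiff ℝ (⊤ : ℕ∞) (fun p : (Fin m → ℝ) × (Fin m → ℝ) => pdx j F p.1 p.2) := by
  simp only [pdx_eq_fderiv hF]
  exact (hF.fderiv_right (m := (⊤ : ℕ∞)) (by simp)).clm_apply contDiff_const

theorem contDiff_pdu {F : (Fin m → ℝ) → (Fin m → ℝ) → E}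
    (hF : ContDiff ℝ (⊤ : ℕ∞) (fun p : (Fin m → ℝ) × (Fin m → ℝ) => F p.1 p.2)) (j : Fin m) :
    ContDiff ℝ (⊤ : ℕ∞) (fun p : (Fin m → ℝ) × (Fin m → ℝ) => pdu j F p.1 p.2) := by
  simp only [pdu_eq_fderiv hF]
  exact (hF.fderiv_right (m := (⊤ : ℕ∞)) (by simp)).clm_apply contDiff_const

theorem pdu_pdx_comm {F : (Fin m → ℝ) → (Fin m → ℝ) → E}
    (hF : ContDiff ℝ (⊤ : ℕ∞) (fun p : (Fin m → ℝ) × (Fin m → ℝ) => F p.1 p.2))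
    (i j : Fin m) : pdu i (pdx j F) = pdx j (pdu i F) := by
  have hd : Differentiable ℝ (fderiv ℝ fun p : (Fin m → ℝ) × (Fin m → ℝ) => F p.1 p.2) :=
    (hF.fderiv_right (m := (⊤ : ℕ∞)) (by simp)).differentiable (by simp)
  ext x u
  rw [pdu_eq_fderiv (contDiff_pdx hF j), pdx_eq_fderiv (contDiff_pdu hF i)]
  simp only [pdx_eq_fderiv hF, pdu_eq_fderiv hF]
  rw [fderiv_clm_apply (hd _) (by fun_prop), fderiv_clm_apply (hd _) (by fun_prop)]
  simpa using (hF.contDiffAt.isSymmSndFDerivAt (x := (x, u)) minSmoothness_le_top) _ _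

theorem contDiff_fiber {F : (Fin m → ℝ) → (Fin m → ℝ) → E}
    (hF : ContDiff ℝ (⊤ : ℕ∞) (fun p : (Fin m → ℝ) × (Fin m → ℝ) => F p.1 p.2))
    (x : Fin m → ℝ) : ContDiff ℝ (⊤ : ℕ∞) (F x) :=
  hF.comp (contDiff_const.prodMk contDiff_id)

theorem contDiff_fiber_left {F : (Fin m → ℝ) → (Fin m → ℝ) → E}
    (hF : ContDiff ℝ (⊤ : ℕ∞) (fun p : (Fin m → ℝ) × (Fin m → ℝ) => F p.1 p.2))
    (u : Fin m → ℝ) : ContDiff ℝ (⊤ : ℕ∞) (fun x => F x u) :=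
  hF.comp (contDiff_id.prodMk contDiff_const)

/-- Differentiation in `x` preserves harmonicity in `u`. -/
theorem lap_pdx {F : (Fin m → ℝ) → (Fin m → ℝ) → E}
    (hF : ContDiff ℝ (⊤ : ℕ∞) (fun p : (Fin m → ℝ) × (Fin m → ℝ) => F p.1 p.2))
    (hlap : ∀ x, lap (F x) = 0) (j : Fin m) (x : Fin m → ℝ) : lap (pdx j F x) = 0 := by
  ext u
  have hcomm : ∀ i, pdu i (pdu i (pdx j F)) = pdx j (pdu i (pdu i F)) := by
    intro i
    rw [pdu_pdx_comm hF, pdu_pdx_comm (contDiff_pdu hF i)]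
  have hzero : (fun y => ∑ i, pdu i (pdu i F) y u) = fun _ => 0 :=
    funext fun y => congrFun (hlap y) u
  calc lap (pdx j F x) u = ∑ i, pdu i (pdu i (pdx j F)) x u := rfl
    _ = ∑ i, pdx j (pdu i (pdu i F)) x u := by simp only [hcomm]
    _ = fderiv ℝ (fun y => ∑ i, pdu i (pdu i F) y u) x (Pi.single j 1) := by
      rw [fderiv_fun_sum fun i _ => (contDiff_fiber_left
        (contDiff_pdu (contDiff_pdu hF i) i) u).differentiable (by simp) x]
      simp [pdx]
    _ = 0 := by simp [hzero]

theorem pdx_homogeneous {k : ℕ} {F : (Fin m → ℝ) → (Fin m → ℝ) → E}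
    (hF : ContDiff ℝ (⊤ : ℕ∞) (fun p : (Fin m → ℝ) × (Fin m → ℝ) => F p.1 p.2))
    (hom : ∀ x (t : ℝ) u, F x (t • u) = t ^ k • F x u) (j : Fin m) (x : Fin m → ℝ)
    (t : ℝ) (u : Fin m → ℝ) : pdx j F x (t • u) = t ^ k • pdx j F x u := by
  simp only [pdx, hom]
  rw [fderiv_fun_const_smul ((contDiff_fiber_left hF u).differentiable (by simp) x)]
  rfl

end TwoVariables

/-- `F` is jointly smooth and each `F x` is harmonic and homogeneous of degree `k`. -/
structure SmoothHarmonic {m : ℕ} {E : Type*} [NormedAddCommGroup E] [NormedSpace ℝ E] (k : ℕ)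
    (F : (Fin m → ℝ) → (Fin m → ℝ) → E) : Prop where
  contDiff : ContDiff ℝ (⊤ : ℕ∞) (fun p : (Fin m → ℝ) × (Fin m → ℝ) => F p.1 p.2)
  map_smul : ∀ x (t : ℝ) u, F x (t • u) = t ^ k • F x u
  lap_eq_zero : ∀ x, lap (F x) = 0

namespace SmoothHarmonic

variable {m k : ℕ} {Cl : Type*} [NormedRing Cl] [NormedAlgebra ℝ Cl] {e : Fin m → Cl}
  {F : (Fin m → ℝ) → (Fin m → ℝ) → Cl}

theorem fiber (hF : SmoothHarmonic k F) (x : Fin m → ℝ) : ContDiff ℝ (⊤ : ℕ∞) (F x) :=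
  contDiff_fiber hF.contDiff x

theorem contDiff_emb_mul_diracu (hF : SmoothHarmonic k F) :
    ContDiff ℝ (⊤ : ℕ∞)
      (fun p : (Fin m → ℝ) × (Fin m → ℝ) => emb e p.2 * diracu e F p.1 p.2) :=
  (contDiff_emb.comp contDiff_snd).mul
    (ContDiff.sum fun j _ => contDiff_const.mul (contDiff_pdu hF.contDiff j))

theorem emb_mul_diracu_smul (hk : 1 ≤ k) (hF : SmoothHarmonic k F) (x : Fin m → ℝ) (t : ℝ)
    (u : Fin m → ℝ) :
    emb e (t • u) * diracu e F x (t • u) = t ^ k • (emb e u * diracu e F x u) := by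
  obtain ⟨n, rfl⟩ := Nat.exists_eq_add_of_le' hk
  have h : diracu e F x (t • u) = t ^ n • diracu e F x u :=
    dirac_homogeneous (hF.fiber x) (hF.map_smul x) t u
  rw [h, emb_smul, smul_mul_smul_comm, pow_succ']

theorem diracu_PpU (hrel : CliffordRel e) (hk : 1 ≤ k) (hc : (m : ℝ) + 2 * k - 2 ≠ 0)
    (hF : SmoothHarmonic k F) (x : Fin m → ℝ) : dirac e (PpU e k F x) = 0 := by
  ext u
  have hs := contDiff_fiber (F := fun x u => emb e u * diracu e F x u) hF.contDiff_emb_mul_diracu x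
  have h := dirac_emb_mul_dirac hrel hk (hF.fiber x) (hF.map_smul x) (hF.lap_eq_zero x) u
  change dirac e (fun u => F x u + _ • (emb e u * diracu e F x u)) u = 0
  rw [dirac_add (hF.fiber x) (hs.const_smul _), dirac_const_smul hs]
  change _ + _ • dirac e (fun v => emb e v * dirac e (F x) v) u = 0
  rw [h, smul_neg, inv_smul_smul₀ hc, add_neg_cancel]

theorem diracu_PmU (hrel : CliffordRel e) (hk : 1 ≤ k) (hc : (m : ℝ) + 2 * k - 2 ≠ 0)
    (hF : SmoothHarmonic k F) (x : Fin m → ℝ) : dirac e (PmU e k F x) = dirac e (F x) := by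
  ext u
  have hs := contDiff_fiber (F := fun x u => emb e u * diracu e F x u) hF.contDiff_emb_mul_diracu x
  have h := dirac_emb_mul_dirac hrel hk (hF.fiber x) (hF.map_smul x) (hF.lap_eq_zero x) u
  change dirac e (fun u => -(_ • (emb e u * diracu e F x u))) u = _
  simp only [← neg_smul]
  rw [dirac_const_smul hs]
  change _ • dirac e (fun v => emb e v * dirac e (F x) v) u = _
  rw [h, smul_neg, neg_smul, neg_neg, inv_smul_smul₀ hc]

protected theorem PpU (hrel : CliffordRel e) (hk : 1 ≤ k) (hc : (m : ℝ) + 2 * k - 2 ≠ 0)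
    (hF : SmoothHarmonic k F) : SmoothHarmonic k (PpU e k F) := by
  have hs : ContDiff ℝ (⊤ : ℕ∞) (fun p : (Fin m → ℝ) × (Fin m → ℝ) => PpU e k F p.1 p.2) :=
    hF.contDiff.add (hF.contDiff_emb_mul_diracu.const_smul _)
  refine ⟨hs, fun x t u => ?_, fun x => ?_⟩
  · simp only [_root_.PpU]
    rw [hF.map_smul, hF.emb_mul_diracu_smul hk, smul_add, smul_comm (t ^ k)]
  · refine lap_eq_zero_of_dirac_dirac hrel (contDiff_fiber hs x) ?_
    rw [hF.diracu_PpU hrel hk hc]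
    ext u
    simp [dirac, pd]

protected theorem PmU (hrel : CliffordRel e) (hk : 1 ≤ k) (hc : (m : ℝ) + 2 * k - 2 ≠ 0)
    (hF : SmoothHarmonic k F) : SmoothHarmonic k (PmU e k F) := by
  have hs : ContDiff ℝ (⊤ : ℕ∞) (fun p : (Fin m → ℝ) × (Fin m → ℝ) => PmU e k F p.1 p.2) :=
    (hF.contDiff_emb_mul_diracu.const_smul _).neg
  refine ⟨hs, fun x t u => ?_, fun x => ?_⟩
  · simp only [_root_.PmU]
    rw [hF.emb_mul_diracu_smul hk, smul_neg, smul_comm (t ^ k)]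
  · refine lap_eq_zero_of_dirac_dirac hrel (contDiff_fiber hs x) ?_
    rw [hF.diracu_PmU hrel hk hc, dirac_dirac hrel (hF.fiber x), hF.lap_eq_zero, neg_zero]

protected theorem diracx (hF : SmoothHarmonic k F) : SmoothHarmonic k (diracx e F) := by
  refine ⟨ContDiff.sum fun j _ => contDiff_const.mul (contDiff_pdx hF.contDiff j),
    fun x t u => ?_, fun x => ?_⟩
  · simp [_root_.diracx, pdx_homogeneous hF.contDiff hF.map_smul, Finset.smul_sum]
  · have hs : ∀ j, ContDiff ℝ (⊤ : ℕ∞) (pdx j F x) := fun j =>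
      contDiff_fiber (contDiff_pdx hF.contDiff j) x
    have hpd : ∀ i, pd i (pd i (diracx e F x)) =
        fun u => ∑ j, e j * pd i (pd i (pdx j F x)) u := by
      intro i
      change pd i (pd i fun u => ∑ j, e j * pdx j F x u) = _
      rw [pd_sum_const_mul e hs, pd_sum_const_mul e fun j => contDiff_pd (hs j) i]
    ext u
    simp only [lap, hpd]
    rw [Finset.sum_comm]
    simp only [← Finset.mul_sum]
    refine Finset.sum_eq_zero fun j _ => ?_
    have h : ∑ i, pd i (pd i (pdx j F x)) u = 0 :=
      congrFun (lap_pdx hF.contDiff hF.lap_eq_zero j x) u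
    rw [h, mul_zero]

theorem PmU_PpU (hrel : CliffordRel e) (hk : 1 ≤ k) (hc : (m : ℝ) + 2 * k - 2 ≠ 0)
    (hF : SmoothHarmonic k F) (x u : Fin m → ℝ) : _root_.PmU e k (_root_.PpU e k F) x u = 0 := by
  have h : diracu e (_root_.PpU e k F) x u = 0 := congrFun (hF.diracu_PpU hrel hk hc x) u
  rw [_root_.PmU, h, mul_zero, smul_zero, neg_zero]

theorem PpU_PmU (hrel : CliffordRel e) (hk : 1 ≤ k) (hc : (m : ℝ) + 2 * k - 2 ≠ 0)
    (hF : SmoothHarmonic k F) (x u : Fin m → ℝ) : _root_.PpU e k (_root_.PmU e k F) x u = 0 := by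
  have h : diracu e (_root_.PmU e k F) x u = diracu e F x u :=
    congrFun (hF.diracu_PmU hrel hk hc x) u
  rw [_root_.PpU, h, _root_.PmU, neg_add_cancel]

theorem isHomPoly_PpU (hrel : CliffordRel e) (hk : 1 ≤ k) (hc : (m : ℝ) + 2 * k - 2 ≠ 0)
    (hF : SmoothHarmonic k F) (x : Fin m → ℝ) : IsHomPoly k (_root_.PpU e k F x) :=
  have h := hF.PpU hrel hk hc
  isHomPoly_of_homogeneous (h.fiber x) (h.map_smul x)

/-- `P_k^-` takes values in `u M_{k-1}`. -/
theorem exists_PmU_eq_emb_mul (hrel : CliffordRel e) (hk : 1 ≤ k) (hF : SmoothHarmonic k F)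
    (x : Fin m → ℝ) : ∃ q : (Fin m → ℝ) → Cl, IsHomPoly (k - 1) q ∧ dirac e q = 0 ∧
      _root_.PmU e k F x = fun u => emb e u * q u := by
  have hD := contDiff_dirac (e := e) (hF.fiber x)
  refine ⟨fun u => (-((m : ℝ) + 2 * k - 2)⁻¹) • dirac e (F x) u, ?_, ?_, ?_⟩
  · obtain ⟨n, rfl⟩ := Nat.exists_eq_add_of_le' hk
    exact Submodule.smul_mem _ _
      (isHomPoly_of_homogeneous hD (dirac_homogeneous (hF.fiber x) (hF.map_smul x)))
  · ext u
    rw [dirac_const_smul hD, dirac_dirac hrel (hF.fiber x), hF.lap_eq_zero]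
    simp
  · ext u
    rw [mul_smul_comm, neg_smul]
    rfl

end SmoothHarmonic

/-- For `m ≥ 3`, `k ≥ 1` and smooth `f : ℝ^m × ℝ^m → Cl_m` with
`f(x,·) ∈ H_k` for each `x`, the compositions `P_k^+ ∘ T_k^* ∘ P_k^+`, `P_k^+ ∘ Q_k ∘ P_k^-`,
`P_k^- ∘ R_k ∘ P_k^+` and `P_k^- ∘ T_k ∘ P_k^-` all annihilate `f`; equivalently, for each
fixed `x`, `(R_k P_k^+ f)(x,·)` and `(T_k P_k^- f)(x,·)` belong to `M_k`, while
`(T_k^* P_k^+ f)(x,·)` and `(Q_k P_k^- f)(x,·)` belong to `u M_{k-1}`. -/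
theorem stmt11 {m k : ℕ} (hm : 3 ≤ m) (hk : 1 ≤ k) {Cl : Type*} [NormedRing Cl]
    [NormedAlgebra ℝ Cl] (e : Fin m → Cl) (hrel : CliffordRel e)
    (f : (Fin m → ℝ) → (Fin m → ℝ) → Cl)
    (hf : ContDiff ℝ (⊤ : ℕ∞) (fun p : (Fin m → ℝ) × (Fin m → ℝ) => f p.1 p.2))
    (hfu : ∀ x, IsHomPoly k (f x) ∧ lap (f x) = 0) :
    ((∀ x u, PpU e k (PmDx e k (PpU e k f)) x u = 0) ∧
      (∀ x u, PpU e k (PmDx e k (PmU e k f)) x u = 0) ∧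
      (∀ x u, PmU e k (PpDx e k (PpU e k f)) x u = 0) ∧
      (∀ x u, PmU e k (PpDx e k (PmU e k f)) x u = 0)) ∧
    (∀ x, (IsHomPoly k (PpDx e k (PpU e k f) x) ∧ dirac e (PpDx e k (PpU e k f) x) = 0) ∧
      (IsHomPoly k (PpDx e k (PmU e k f) x) ∧ dirac e (PpDx e k (PmU e k f) x) = 0) ∧
      (∃ q : (Fin m → ℝ) → Cl, IsHomPoly (k - 1) q ∧ dirac e q = 0 ∧
        PmDx e k (PpU e k f) x = fun u => emb e u * q u) ∧
      (∃ q : (Fin m → ℝ) → Cl, IsHomPoly (k - 1) q ∧ dirac e q = 0 ∧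
        PmDx e k (PmU e k f) x = fun u => emb e u * q u)) := by
  have hc : (m : ℝ) + 2 * k - 2 ≠ 0 := by
    have h1 : (3 : ℝ) ≤ m := by exact_mod_cast hm
    have h2 : (1 : ℝ) ≤ k := by exact_mod_cast hk
    linarith
  have hF : SmoothHarmonic k f := ⟨hf, fun x => (hfu x).1.map_smul, fun x => (hfu x).2⟩
  have hp : SmoothHarmonic k (diracx e (PpU e k f)) := (hF.PpU hrel hk hc).diracx
  have hn : SmoothHarmonic k (diracx e (PmU e k f)) := (hF.PmU hrel hk hc).diracx
  exact ⟨⟨hp.PpU_PmU hrel hk hc, hn.PpU_PmU hrel hk hc, hp.PmU_PpU hrel hk hc,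
      hn.PmU_PpU hrel hk hc⟩,
    fun x => ⟨⟨hp.isHomPoly_PpU hrel hk hc x, hp.diracu_PpU hrel hk hc x⟩,
      ⟨hn.isHomPoly_PpU hrel hk hc x, hn.diracu_PpU hrel hk hc x⟩,
      hp.exists_PmU_eq_emb_mul hrel hk x, hn.exists_PmU_eq_emb_mul hrel hk x⟩⟩
end
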